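/- arXiv:1804.01742 — 6 statements merged into one kernel-verified Lean document; each statement's English description precedes it below -/
import Mathlib

section
/- Suppose that for i = 1,2 there exist positive real numbers ρᵢ and sᵢ with ρᵢ < cᵢ·sᵢ such that: (i) g₁(t,w₁,w₂,z₁,z₂) < m₁ρ₁ for all t ∈ [0,1], w₁ ∈ [0,ρ₁], w₂ ∈ [0,ρ₂], z₁,z₂ ≥ 0, and g₂(t,w₁,w₂,z₁,z₂) < m₂ρ₂ on the same set; (ii) g₁(t,w₁,w₂,z₁,z₂) > M₁s₁ for all t ∈ [a₁,b₁], w₁ ∈ [s₁, s₁/c₁], w₂ ∈ [0, s₂/c₂], z₁,z₂ ≥ 0, and g₂(t,w₁,w₂,z₁,z₂) > M₂s₂ for all t ∈ [a₂,b₂], w₁ ∈ [0, s₁/c₁], w₂ ∈ [s₂, s₂/c₂], z₁,z₂ ≥ 0. Then there exist functions u,v : [0,1] → [0,∞), continuous on [0,1] and twice continuously differentiable on (0,1), not both identically zero, such that −u''(t) = g₁(t,u(t),v(t),|u'(t)|,|v'(t)|) and −v''(t) = g₂(t,u(t),v(t),|u'(t)|,|v'(t)|) for all t ∈ (0,1),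 with boundary conditions u(0) = u(1) = 0, v(0) = 0 and v'(1) = 0 (v being continuously differentiable at t = 1 from the left), and moreover min_{t∈[a₁,b₁]} u(t) ≥ c₁·sup_{t∈[0,1]} u(t) and min_{t∈[a₂,b₂]} v(t) ≥ c₂·sup_{t∈[0,1]} v(t). -/
/-- `IsPosSol a₁ b₁ a₂ b₂ c₁ c₂ g₁ g₂ u v` says that `(u,v)` is a positive
solution, lying in the cone determined by `[a₁,b₁]`, `c₁` and `[a₂,b₂]`, `c₂`,
of the system
`−u'' = g₁(t,u,v,|u'|,|v'|)`, `−v'' = g₂(t,u,v,|u'|,|v'|)` on `(0,1)` with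
boundary conditions `u(0) = u(1) = v(0) = v'(1) = 0` (the last derivative taken
from the left at `t = 1`):  `u, v` are nonnegative, continuous on `[0,1]`,
twice continuously differentiable on `(0,1)`, not both identically zero, and
satisfy the Harnack-type inequalities
`min_{[a₁,b₁]} u ≥ c₁·sup_{[0,1]} u` and `min_{[a₂,b₂]} v ≥ c₂·sup_{[0,1]} v`. -/
def IsPosSol (a₁ b₁ a₂ b₂ c₁ c₂ : ℝ) (g₁ g₂ : ℝ → ℝ → ℝ → ℝ → ℝ → ℝ)
    (u v : ℝ → ℝ) : Prop :=
  (∀ t ∈ Set.Icc (0:ℝ) 1, 0 ≤ u t) ∧ (∀ t ∈ Set.Icc (0:ℝ) 1, 0 ≤ v t) ∧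
  ContinuousOn u (Set.Icc 0 1) ∧ ContinuousOn v (Set.Icc 0 1) ∧
  ContDiffOn ℝ 2 u (Set.Ioo 0 1) ∧ ContDiffOn ℝ 2 v (Set.Ioo 0 1) ∧
  ¬ ((∀ t ∈ Set.Icc (0:ℝ) 1, u t = 0) ∧ (∀ t ∈ Set.Icc (0:ℝ) 1, v t = 0)) ∧
  (∀ t ∈ Set.Ioo (0:ℝ) 1,
    -(deriv (deriv u) t) = g₁ t (u t) (v t) |deriv u t| |deriv v t|) ∧
  (∀ t ∈ Set.Ioo (0:ℝ) 1,
    -(deriv (deriv v) t) = g₂ t (u t) (v t) |deriv u t| |deriv v t|) ∧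
  u 0 = 0 ∧ u 1 = 0 ∧ v 0 = 0 ∧ HasDerivWithinAt v 0 (Set.Iic 1) 1 ∧
  c₁ * sSup (u '' Set.Icc (0:ℝ) 1) ≤ sInf (u '' Set.Icc a₁ b₁) ∧
  c₂ * sSup (v '' Set.Icc (0:ℝ) 1) ≤ sInf (v '' Set.Icc a₂ b₂)

open MeasureTheory Filter Topology


noncomputable def tonelliIt {E : Type} [NormedAddCommGroup E] [NormedSpace ℝ E] (f : ℝ × E → E) (h : ℝ) : ℕ → E → ℝ → E
  | 0 => fun x _ => x
  | k + 1 => fun x t => x + ∫ s in (0:ℝ)..t, f (s, tonelliIt f h k x (max (s - h) 0))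

lemma tonelliIt_cont {E : Type} [NormedAddCommGroup E] [NormedSpace ℝ E] (f : ℝ × E → E) (hf : Continuous f) (h : ℝ) (k : ℕ) :
    Continuous (fun p : E × ℝ => tonelliIt f h k p.1 p.2) := by
  induction k with
  | zero => exact continuous_fst
  | succ k ih =>
    simp only [tonelliIt]
    refine continuous_fst.add ?_
    apply intervalIntegral.continuous_parametric_primitive_of_continuous
      (f := fun (x : E) s => f (s, tonelliIt f h k x (max (s - h) 0)))
    refine hf.comp (continuous_snd.prodMk ?_)
    exact ih.comp (continuous_fst.prodMk ((continuous_snd.sub continuous_const).max continuous_const))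

lemma tonelliIt_stab {E : Type} [NormedAddCommGroup E] [NormedSpace ℝ E] (f : ℝ × E → E) (h : ℝ) (hh : 0 < h) (k : ℕ) (x : E) (t : ℝ)
    (ht0 : 0 ≤ t) (ht : t ≤ k * h) : tonelliIt f h (k + 1) x t = tonelliIt f h k x t := by
  induction k generalizing t with
  | zero =>
    have : t = 0 := by simp at ht; linarith
    subst this
    simp [tonelliIt]
  | succ k ih =>
    change x + _ = x + _
    congr 1
    apply intervalIntegral.integral_congr
    intro s hs
    rw [Set.uIcc_of_le ht0] at hs
    simp only
    congr 2
    push_cast at ht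
    apply ih _ (le_max_right _ _)
    apply max_le
    · linarith [hs.2]
    · positivity

lemma tonelli {E : Type} [NormedAddCommGroup E] [NormedSpace ℝ E] [CompleteSpace E] (f : ℝ × E → E) (hf : Continuous f) (n : ℕ) :
    ∃ Y : E → ℝ → E, Continuous (fun p : E × ℝ => Y p.1 p.2) ∧ (∀ x, Y x 0 = x) ∧
      ∀ x, ∀ t ∈ Set.Icc (0:ℝ) 1,
        HasDerivAt (Y x) (f (t, Y x (max (t - 1 / ((n:ℝ) + 1)) 0))) t := by
  set h : ℝ := 1 / ((n:ℝ) + 1) with hh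
  have hp : 0 < h := by positivity
  refine ⟨tonelliIt f h (n + 2), tonelliIt_cont f hf h _, fun x => by simp [tonelliIt], ?_⟩
  intro x t ht
  have e := tonelliIt_stab f h hp (n + 1) x (max (t - h) 0) (le_max_right _ _) (by
    have : ((n + 1 : ℕ) : ℝ) * h = 1 := by rw [hh]; push_cast; field_simp
    rw [this]
    apply max_le <;> linarith [ht.2])
  have e2 : n + 1 + 1 = n + 2 := rfl
  rw [e2] at e
  rw [e]
  have hc : Continuous (fun s => f (s, tonelliIt f h (n+1) x (max (s - h) 0))) :=
    hf.comp (continuous_id.prodMk ((tonelliIt_cont f hf h (n+1)).comp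
      (continuous_const.prodMk (by fun_prop))))
  have := (intervalIntegral.integral_hasDerivAt_right (hc.intervalIntegrable 0 t)
    (hc.stronglyMeasurableAtFilter _ _) hc.continuousAt).const_add x
  exact this

lemma limit_ode {E : Type} [NormedAddCommGroup E] [NormedSpace ℝ E] [FiniteDimensional ℝ E] (f : ℝ × E → E) (hf : Continuous f) (B R : ℝ)
    (hB : ∀ p, ‖f p‖ ≤ B) (Y : ℕ → ℝ → E) (hY0 : ∀ n, ‖Y n 0‖ ≤ R)
    (hY : ∀ n, ∀ t ∈ Set.Icc (0:ℝ) 1,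
        HasDerivAt (Y n) (f (t, Y n (max (t - 1 / ((n:ℝ) + 1)) 0))) t) :
    ∃ X : ℝ → E, ∃ φ : ℕ → ℕ, StrictMono φ ∧ Continuous X ∧
      (∀ t ∈ Set.Icc (0:ℝ) 1, Tendsto (fun n => Y (φ n) t) atTop (𝓝 (X t))) ∧
      ∀ t ∈ Set.Icc (0:ℝ) 1, HasDerivAt X (f (t, X t)) t := by
  have : CompleteSpace E := FiniteDimensional.complete ℝ E
  have hB0 : 0 ≤ B := (norm_nonneg _).trans (hB 0)
  have hlip : ∀ n, ∀ s ∈ Set.Icc (0:ℝ) 1, ∀ t ∈ Set.Icc (0:ℝ) 1,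
      ‖Y n t - Y n s‖ ≤ B * ‖t - s‖ := by
    intro n s hs t ht
    exact (convex_Icc (0:ℝ) 1).norm_image_sub_le_of_norm_hasDerivWithin_le
      (fun x hx => (hY n x hx).hasDerivWithinAt) (fun x _ => hB _) hs ht
  have hYc : ∀ n, Continuous (fun t : Set.Icc (0:ℝ) 1 => Y n t) := fun n =>
    continuous_iff_continuousAt.2 fun t =>
      ((hY n t t.2).continuousAt).comp continuous_subtype_val.continuousAt
  let y : ℕ → BoundedContinuousFunction (Set.Icc (0:ℝ) 1) E := fun n =>
    BoundedContinuousFunction.mkOfCompact ⟨_, hYc n⟩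
  have hcomp : IsCompact (closure (Set.range y)) := by
    apply BoundedContinuousFunction.arzela_ascoli (Metric.closedBall (0:E) (R + B))
      (isCompact_closedBall _ _)
    · rintro _ x ⟨n, rfl⟩
      rw [mem_closedBall_zero_iff]
      have h1 := hlip n 0 (by simp) x x.2
      have h2 : ‖(x:ℝ) - 0‖ ≤ 1 := by
        rw [sub_zero, Real.norm_of_nonneg x.2.1]; exact x.2.2
      have h3 : ‖Y n x‖ ≤ ‖Y n x - Y n 0‖ + ‖Y n 0‖ := by
        simpa using norm_add_le (Y n x - Y n 0) (Y n 0)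
      have h4 := hY0 n
      change ‖Y n x‖ ≤ _
      nlinarith
    · apply UniformEquicontinuous.equicontinuous
      apply LipschitzWith.uniformEquicontinuous _ B.toNNReal
      rintro ⟨_, ⟨n, rfl⟩⟩
      apply LipschitzWith.of_dist_le_mul
      intro a b
      rw [Real.coe_toNNReal _ hB0, dist_eq_norm]
      exact hlip n b b.2 a a.2
  obtain ⟨z, -, φ, hφ, hz⟩ := hcomp.tendsto_subseq (fun n => subset_closure (Set.mem_range_self n))
  have hzt : ∀ t : Set.Icc (0:ℝ) 1, Tendsto (fun n => Y (φ n) t) atTop (𝓝 (z t)) := by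
    intro t
    exact ((BoundedContinuousFunction.lipschitz_eval_const t).continuous.tendsto z).comp hz
  let Z : ℝ → E := fun t => z (Set.projIcc 0 1 zero_le_one t)
  have hZc : Continuous Z := z.continuous.comp continuous_projIcc
  have hZt : ∀ t ∈ Set.Icc (0:ℝ) 1, Tendsto (fun n => Y (φ n) t) atTop (𝓝 (Z t)) := by
    intro t ht
    have := hzt ⟨t, ht⟩
    simpa [Z, Set.projIcc_of_mem zero_le_one ht] using this
  have hfc : Continuous (fun s => f (s, Z s)) := hf.comp (continuous_id.prodMk hZc)
  let X : ℝ → E := fun t => Z 0 + ∫ s in (0:ℝ)..t, f (s, Z s)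
  have hXd : ∀ t, HasDerivAt X (f (t, Z t)) t := fun t =>
    (intervalIntegral.integral_hasDerivAt_right (hfc.intervalIntegrable 0 t)
      (hfc.stronglyMeasurableAtFilter _ _) hfc.continuousAt).const_add (Z 0)
  have hXZ : ∀ t ∈ Set.Icc (0:ℝ) 1, X t = Z t := by
    intro t ht
    have hmem : ∀ n : ℕ, ∀ s ∈ Set.Icc (0:ℝ) 1, max (s - 1 / ((n:ℝ) + 1)) 0 ∈ Set.Icc (0:ℝ) 1 := by
      intro n s hs
      have : (0:ℝ) < 1 / ((n:ℝ) + 1) := Nat.one_div_pos_of_nat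
      exact ⟨le_max_right _ _, max_le (by linarith [hs.2]) zero_le_one⟩
    have hsub : ∀ s ∈ Set.uIcc 0 t, s ∈ Set.Icc (0:ℝ) 1 := by
      intro s hs
      rw [Set.uIcc_of_le ht.1] at hs
      exact ⟨hs.1, hs.2.trans ht.2⟩
    have hYcon : ∀ n : ℕ, ContinuousOn (Y n) (Set.Icc 0 1) := fun n s hs =>
      (hY n s hs).continuousAt.continuousWithinAt
    have hcn : ∀ n : ℕ, ContinuousOn (fun s => f (s, Y n (max (s - 1 / ((n:ℝ) + 1)) 0)))
        (Set.Icc 0 1) := by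
      intro n
      refine hf.comp_continuousOn (continuousOn_id.prodMk ?_)
      exact (hYcon n).comp (by fun_prop) (hmem n)
    have hint : ∀ n : ℕ, ∫ s in (0:ℝ)..t, f (s, Y n (max (s - 1 / ((n:ℝ) + 1)) 0)) = Y n t - Y n 0 := by
      intro n
      apply intervalIntegral.integral_eq_sub_of_hasDerivAt
      · exact fun s hs => hY n s (hsub s hs)
      · exact ((hcn n).mono hsub).intervalIntegrable
    have hlim : Tendsto (fun n => ∫ s in (0:ℝ)..t,
        f (s, Y (φ n) (max (s - 1 / (((φ n):ℝ) + 1)) 0))) atTop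
        (𝓝 (∫ s in (0:ℝ)..t, f (s, Z s))) := by
      apply intervalIntegral.tendsto_integral_filter_of_dominated_convergence (fun _ => B)
      · refine Eventually.of_forall fun n => ?_
        have := (((hcn (φ n)).mono hsub).intervalIntegrable (μ := volume)).aestronglyMeasurable
        rwa [Set.uIoc_of_le ht.1]
      · exact Eventually.of_forall fun n => Eventually.of_forall fun s _ => hB _
      · simp
      · refine Eventually.of_forall fun s hs => ?_
        have hs' := hsub s (Set.uIoc_subset_uIcc hs)
        refine (hf.tendsto _).comp (tendsto_const_nhds.prodMk_nhds ?_)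
        have hd : Tendsto (fun n => Y (φ n) (max (s - 1 / (((φ n):ℝ) + 1)) 0) - Y (φ n) s) atTop
            (𝓝 0) := by
          have h0 : Tendsto (fun n => B * (1 / (((φ n):ℝ) + 1))) atTop (𝓝 0) := by
            have := (tendsto_one_div_add_atTop_nhds_zero_nat (𝕜 := ℝ)).comp hφ.tendsto_atTop
            simpa using this.const_mul B
          refine squeeze_zero_norm (fun n => ?_) h0
          refine (hlip _ s hs' _ (hmem _ s hs')).trans ?_
          apply mul_le_mul_of_nonneg_left _ hB0
          have hp : (0:ℝ) < 1 / (((φ n):ℝ) + 1) := by positivity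
          rw [Real.norm_eq_abs, abs_le]
          constructor
          · linarith [le_max_left (s - 1 / (((φ n):ℝ) + 1)) 0]
          · have : max (s - 1 / (((φ n):ℝ) + 1)) 0 ≤ s := max_le (by linarith) hs'.1
            linarith
        simpa using hd.add (hZt s hs')
    simp only [hint] at hlim
    have := tendsto_nhds_unique hlim ((hZt t ht).sub (hZt 0 (by simp)))
    simp only [X, this]
    abel
  refine ⟨X, φ, hφ, continuous_iff_continuousAt.2 fun t => (hXd t).continuousAt, ?_, ?_⟩
  · intro t ht
    rw [hXZ t ht]; exact hZt t ht
  · intro t ht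
    rw [hXZ t ht]; exact hXd t

lemma aux_angle {S : Set (ℝ × ℝ)} (hS : IsPreconnected S) (θ : ℝ × ℝ → ℝ) (hθ : Continuous θ) (a : ℝ)
    (hpos : ∀ x ∈ S, 0 < Real.cos (θ x - a)) (hne : S.Nonempty) :
    ∃ k : ℤ, ∀ x ∈ S, |θ x - a - k * (2 * Real.pi)| < Real.pi / 2 := by
  have hpi := Real.pi_pos
  obtain ⟨x0, hx0⟩ := hne
  refine ⟨round ((θ x0 - a) / (2 * Real.pi)), ?_⟩
  set k := round ((θ x0 - a) / (2 * Real.pi)) with hk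
  have h1 : |θ x0 - a - k * (2 * Real.pi)| ≤ Real.pi := by
    have := abs_sub_round ((θ x0 - a) / (2 * Real.pi))
    rw [← hk] at this
    have e : θ x0 - a - k * (2 * Real.pi) = ((θ x0 - a) / (2 * Real.pi) - k) * (2 * Real.pi) := by
      field_simp
    rw [e, abs_mul, abs_of_pos (by positivity : 0 < 2 * Real.pi)]
    nlinarith
  have hcos : ∀ x ∈ S, 0 < Real.cos |θ x - a - k * (2 * Real.pi)| := by
    intro x hx
    rw [Real.cos_abs, Real.cos_sub_int_mul_two_pi]
    exact hpos x hx
  have h2 : |θ x0 - a - k * (2 * Real.pi)| < Real.pi / 2 := by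
    by_contra hcon
    push Not at hcon
    have := Real.cos_nonpos_of_pi_div_two_le_of_le hcon (by linarith)
    linarith [hcos x0 hx0]
  intro x hx
  by_contra hcon
  push Not at hcon
  have hc : ContinuousOn (fun x => |θ x - a - k * (2 * Real.pi)|) S := by fun_prop
  obtain ⟨y, hy, hy'⟩ := hS.intermediate_value hx0 hx hc ⟨h2.le, hcon⟩
  have := hcos y hy
  simp only at hy'
  rw [hy', Real.cos_pi_div_two] at this
  exact lt_irrefl _ this

lemma miranda (F₁ F₂ : ℝ × ℝ → ℝ) (h₁ : Continuous F₁) (h₂ : Continuous F₂) (α β α' β' : ℝ)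
    (hl : ∀ p : ℝ × ℝ, p.1 ≤ α → F₁ p < 0) (hr : ∀ p : ℝ × ℝ, β ≤ p.1 → 0 < F₁ p)
    (hb : ∀ p : ℝ × ℝ, p.2 ≤ α' → F₂ p < 0) (ht : ∀ p : ℝ × ℝ, β' ≤ p.2 → 0 < F₂ p) :
    ∃ p, F₁ p = 0 ∧ F₂ p = 0 := by
  by_contra hcon
  push Not at hcon
  have hpi := Real.pi_pos
  let F : C(ℝ × ℝ, {z : ℂ // z ≠ 0}) := ⟨fun p => ⟨⟨F₁ p, F₂ p⟩, by
    intro h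
    have e1 := congrArg Complex.re h
    have e2 := congrArg Complex.im h
    exact hcon p e1 e2⟩, by
    refine Continuous.subtype_mk ?_ _
    have : (fun p => (⟨F₁ p, F₂ p⟩ : ℂ)) = fun p => (F₁ p : ℂ) + F₂ p * Complex.I := by
      ext p; exact Complex.mk_eq_add_mul_I _ _
    rw [this]; fun_prop⟩
  have hF0 : (F (0, 0) : ℂ) ≠ 0 := (F (0,0)).2
  obtain ⟨L, ⟨-, hL⟩, -⟩ := Complex.isCoveringMap_exp.existsUnique_continuousMap_lifts F
    (a₀ := ((0:ℝ),(0:ℝ))) (e₀ := Complex.log (F (0,0))) (Subtype.ext (Complex.exp_log hF0))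
  have hL' : ∀ p, Complex.exp (L p) = ⟨F₁ p, F₂ p⟩ := fun p => congrArg Subtype.val (congrFun hL p)
  let θ : ℝ × ℝ → ℝ := fun p => (L p).im
  have hθ : Continuous θ := by fun_prop
  have e1 : ∀ p, Real.exp (L p).re * Real.cos (θ p) = F₁ p := fun p => by
    rw [← Complex.exp_re, hL']
  have e2 : ∀ p, Real.exp (L p).re * Real.sin (θ p) = F₂ p := fun p => by
    rw [← Complex.exp_im, hL']
  have c1 : ∀ p, 0 < F₁ p → 0 < Real.cos (θ p) := fun p h => by
    rw [← e1] at h; exact pos_of_mul_pos_right h (Real.exp_pos _).le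
  have c2 : ∀ p, 0 < F₂ p → 0 < Real.sin (θ p) := fun p h => by
    rw [← e2] at h; exact pos_of_mul_pos_right h (Real.exp_pos _).le
  have c3 : ∀ p, F₁ p < 0 → Real.cos (θ p) < 0 := fun p h => by
    rw [← e1] at h; exact neg_of_mul_neg_right h (Real.exp_pos _).le
  have c4 : ∀ p, F₂ p < 0 → Real.sin (θ p) < 0 := fun p h => by
    rw [← e2] at h; exact neg_of_mul_neg_right h (Real.exp_pos _).le
  have conv1 : ∀ I : Set ℝ, Convex ℝ I → IsPreconnected (I ×ˢ (Set.univ : Set ℝ)) := fun I hI =>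
    (hI.prod convex_univ).isPreconnected
  have conv2 : ∀ I : Set ℝ, Convex ℝ I → IsPreconnected ((Set.univ : Set ℝ) ×ˢ I) := fun I hI =>
    (convex_univ.prod hI).isPreconnected
  obtain ⟨j, hj⟩ := aux_angle (conv1 (Set.Ici β) (convex_Ici _)) θ hθ 0 (fun x hx => by
    rw [sub_zero]; exact c1 x (hr x hx.1)) ⟨(β, 0), by simp⟩
  obtain ⟨k, hk⟩ := aux_angle (conv2 (Set.Ici β') (convex_Ici _)) θ hθ (Real.pi / 2) (fun x hx => by
    rw [Real.cos_sub_pi_div_two]; exact c2 x (ht x hx.2)) ⟨(0, β'), by simp⟩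
  obtain ⟨l, hl'⟩ := aux_angle (conv1 (Set.Iic α) (convex_Iic _)) θ hθ Real.pi (fun x hx => by
    rw [Real.cos_sub_pi]; linarith [c3 x (hl x hx.1)]) ⟨(α, 0), by simp⟩
  obtain ⟨m, hm⟩ := aux_angle (conv2 (Set.Iic α') (convex_Iic _)) θ hθ (Real.pi / 2 + Real.pi)
    (fun x hx => by
      rw [← sub_sub, Real.cos_sub_pi, Real.cos_sub_pi_div_two]; linarith [c4 x (hb x hx.2)])
    ⟨(0, α'), by simp⟩
  have r1 := abs_lt.1 (hj (β, β') (by simp))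
  have r2 := abs_lt.1 (hk (β, β') (by simp))
  have r3 := abs_lt.1 (hk (α, β') (by simp))
  have r4 := abs_lt.1 (hl' (α, β') (by simp))
  have r5 := abs_lt.1 (hl' (α, α') (by simp))
  have r6 := abs_lt.1 (hm (α, α') (by simp))
  have r7 := abs_lt.1 (hm (β, α') (by simp))
  have r8 := abs_lt.1 (hj (β, α') (by simp))
  have key : ∀ i i' : ℤ, (i : ℝ) * (2 * Real.pi) < i' * (2 * Real.pi) + 2 * Real.pi → i ≤ i' := by
    intro i i' h
    have : (i : ℝ) < i' + 1 := by
      by_contra hc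
      push Not at hc
      nlinarith
    have : i < i' + 1 := by exact_mod_cast this
    omega
  have q1 : j ≤ k := key _ _ (by linarith)
  have q2 : k ≤ l := key _ _ (by linarith)
  have q3 : l ≤ m := key _ _ (by linarith)
  have q6 : m < j := by
    have : (m:ℝ) < j := by
      by_contra hc
      push Not at hc
      nlinarith
    exact_mod_cast this
  omega

lemma deriv_lower (φ φ' : ℝ → ℝ) (C : ℝ) (hd : ∀ t ∈ Set.Icc (0:ℝ) 1, HasDerivAt φ (φ' t) t)
    (hC : ∀ t ∈ Set.Icc (0:ℝ) 1, C ≤ φ' t) (s t : ℝ) (hs : 0 ≤ s) (hst : s ≤ t) (ht : t ≤ 1) :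
    C * (t - s) ≤ φ t - φ s := by
  apply (convex_Icc (0:ℝ) 1).mul_sub_le_image_sub_of_le_deriv
    (fun x hx => (hd x hx).continuousAt.continuousWithinAt)
    (fun x hx => (hd x (interior_subset hx)).differentiableAt.differentiableWithinAt)
    (fun x hx => by rw [(hd x (interior_subset hx)).deriv]; exact hC x (interior_subset hx))
    s ⟨hs, hst.trans ht⟩ t ⟨hs.trans hst, ht⟩ hst

lemma deriv_upper (φ φ' : ℝ → ℝ) (C : ℝ) (hd : ∀ t ∈ Set.Icc (0:ℝ) 1, HasDerivAt φ (φ' t) t)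
    (hC : ∀ t ∈ Set.Icc (0:ℝ) 1, φ' t ≤ C) (s t : ℝ) (hs : 0 ≤ s) (hst : s ≤ t) (ht : t ≤ 1) :
    φ t - φ s ≤ C * (t - s) := by
  have := deriv_lower (fun x => - φ x) (fun x => - φ' x) (-C) (fun x hx => (hd x hx).neg)
    (fun x hx => neg_le_neg (hC x hx)) s t hs hst ht
  linarith

/-- truncation to `[-R, R]` -/
noncomputable def clampR (R x : ℝ) : ℝ := max (-R) (min R x)

lemma clampR_cont (R : ℝ) : Continuous (clampR R) := by unfold clampR; fun_prop

lemma clampR_eq {R x : ℝ} (h1 : -R ≤ x) (h2 : x ≤ R) : clampR R x = x := by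
  unfold clampR; rw [min_eq_right h2, max_eq_right h1]

lemma clampR_abs {R : ℝ} (hR : 0 ≤ R) (x : ℝ) : |clampR R x| ≤ R := by
  unfold clampR
  rw [abs_le]
  exact ⟨le_max_left _ _, max_le (by linarith) (min_le_left _ _)⟩

lemma clampR_le {R x : ℝ} (hR : 1 ≤ R) (hx : x ≤ -1) : clampR R x ≤ -1 := by
  unfold clampR
  exact max_le (by linarith) ((min_le_right _ _).trans hx)

lemma le_clampR {R x : ℝ} (hR : 1 ≤ R) (hx : 1 ≤ x) : 1 ≤ clampR R x := by
  unfold clampR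
  exact le_max_of_le_right (le_min hR hx)

lemma bvp (G₁ G₂ : ℝ × ℝ × ℝ × ℝ × ℝ → ℝ) (hG₁ : Continuous G₁) (hG₂ : Continuous G₂) (K₁ K₂ : ℝ)
    (h1 : ∀ x, 0 < G₁ x) (h1' : ∀ x, G₁ x < K₁) (h2 : ∀ x, 0 < G₂ x) (h2' : ∀ x, G₂ x < K₂) :
    ∃ u v P Q : ℝ → ℝ,
      (∀ t ∈ Set.Icc (0:ℝ) 1, HasDerivAt u (P t) t) ∧
      (∀ t ∈ Set.Icc (0:ℝ) 1, HasDerivAt v (Q t) t) ∧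
      (∀ t ∈ Set.Icc (0:ℝ) 1, HasDerivAt P (-G₁ (t, u t, v t, P t, Q t)) t) ∧
      (∀ t ∈ Set.Icc (0:ℝ) 1, HasDerivAt Q (-G₂ (t, u t, v t, P t, Q t)) t) ∧
      u 0 = 0 ∧ u 1 = 0 ∧ v 0 = 0 ∧ Q 1 = 0 := by
  have hK1 : 0 < K₁ := (h1 0).trans (h1' 0)
  have hK2 : 0 < K₂ := (h2 0).trans (h2' 0)
  obtain ⟨R, hR⟩ : ∃ R, R = K₁ + K₂ + 1 := ⟨_, rfl⟩
  have hR1 : 1 ≤ R := by linarith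
  have hR0 : 0 ≤ R := by linarith
  let f : ℝ × (ℝ × ℝ × ℝ × ℝ) → ℝ × ℝ × ℝ × ℝ := fun x =>
    (clampR R x.2.2.2.1, clampR R x.2.2.2.2, -G₁ x, -G₂ x)
  have hf : Continuous f := by
    have := clampR_cont R
    fun_prop
  have hB : ∀ x, ‖f x‖ ≤ R := by
    intro x
    have a1 := h1 x
    have a2 := h1' x
    have a3 := h2 x
    have a4 := h2' x
    simp only [f, Prod.norm_def, Real.norm_eq_abs, abs_neg, sup_le_iff]
    refine ⟨clampR_abs hR0 _, clampR_abs hR0 _, ?_, ?_⟩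
    · rw [abs_of_pos a1]; linarith
    · rw [abs_of_pos a3]; linarith
  have step : ∀ n : ℕ, ∃ Y : ℝ → ℝ × ℝ × ℝ × ℝ, ∃ p q : ℝ, Y 0 = (0, 0, p, q) ∧
      (-1 ≤ p ∧ p ≤ K₁ + 1) ∧ (-1 ≤ q ∧ q ≤ K₂ + 1) ∧ (Y 1).1 = 0 ∧ (Y 1).2.2.2 = 0 ∧
      ∀ t ∈ Set.Icc (0:ℝ) 1,
        HasDerivAt Y (f (t, Y (max (t - 1 / ((n:ℝ) + 1)) 0))) t := by
    intro n
    obtain ⟨Y, hYc, hY0, hYd⟩ := tonelli f hf n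
    have hmem : ∀ s ∈ Set.Icc (0:ℝ) 1, max (s - 1 / ((n:ℝ) + 1)) 0 ∈ Set.Icc (0:ℝ) 1 := by
      intro s hs
      have : (0:ℝ) < 1 / ((n:ℝ) + 1) := by positivity
      exact ⟨le_max_right _ _, max_le (by linarith [hs.2]) zero_le_one⟩
    have d1 := fun x t ht => (hYd x t ht).fst
    have d3 := fun x t ht => (hYd x t ht).snd.snd.fst
    have d4 := fun x t ht => (hYd x t ht).snd.snd.snd
    let F₁ : ℝ × ℝ → ℝ := fun p => (Y (0, 0, p.1, p.2) 1).1
    let F₂ : ℝ × ℝ → ℝ := fun p => (Y (0, 0, p.1, p.2) 1).2.2.2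
    have hc : Continuous (fun p : ℝ × ℝ => Y (0, 0, p.1, p.2) 1) :=
      hYc.comp (by fun_prop : Continuous (fun p : ℝ × ℝ => (((0:ℝ), (0:ℝ), p.1, p.2), (1:ℝ))))
    have s1 : ∀ p : ℝ × ℝ, p.1 ≤ -1 → F₁ p < 0 := by
      intro p hp
      have hP : ∀ t ∈ Set.Icc (0:ℝ) 1, (Y (0, 0, p.1, p.2) t).2.2.1 ≤ -1 := by
        intro t ht
        have := deriv_upper _ _ 0 (d3 (0, 0, p.1, p.2)) (fun s hs => by
          simp only [f]; linarith [h1 (s, Y (0, 0, p.1, p.2) (max (s - 1 / ((n:ℝ) + 1)) 0))])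
          0 t le_rfl ht.1 ht.2
        simp only [hY0] at this
        linarith
      have := deriv_upper _ _ (-1) (d1 (0, 0, p.1, p.2)) (fun s hs => by
        simp only [f]; exact clampR_le hR1 (hP _ (hmem s hs))) 0 1 le_rfl zero_le_one le_rfl
      simp only [hY0] at this
      simp only [F₁]
      linarith
    have s2 : ∀ p : ℝ × ℝ, K₁ + 1 ≤ p.1 → 0 < F₁ p := by
      intro p hp
      have hP : ∀ t ∈ Set.Icc (0:ℝ) 1, 1 ≤ (Y (0, 0, p.1, p.2) t).2.2.1 := by
        intro t ht
        have := deriv_lower _ _ (-K₁) (d3 (0, 0, p.1, p.2)) (fun s hs => by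
          simp only [f]; linarith [h1' (s, Y (0, 0, p.1, p.2) (max (s - 1 / ((n:ℝ) + 1)) 0))])
          0 t le_rfl ht.1 ht.2
        simp only [hY0] at this
        nlinarith [ht.2]
      have := deriv_lower _ _ 1 (d1 (0, 0, p.1, p.2)) (fun s hs => by
        simp only [f]; exact le_clampR hR1 (hP _ (hmem s hs))) 0 1 le_rfl zero_le_one le_rfl
      simp only [hY0] at this
      simp only [F₁]
      linarith
    have s3 : ∀ p : ℝ × ℝ, p.2 ≤ -1 → F₂ p < 0 := by
      intro p hp
      have := deriv_upper _ _ 0 (d4 (0, 0, p.1, p.2)) (fun s hs => by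
          simp only [f]; linarith [h2 (s, Y (0, 0, p.1, p.2) (max (s - 1 / ((n:ℝ) + 1)) 0))])
          0 1 le_rfl zero_le_one le_rfl
      simp only [hY0] at this
      simp only [F₂]
      linarith
    have s4 : ∀ p : ℝ × ℝ, K₂ + 1 ≤ p.2 → 0 < F₂ p := by
      intro p hp
      have := deriv_lower _ _ (-K₂) (d4 (0, 0, p.1, p.2)) (fun s hs => by
          simp only [f]; linarith [h2' (s, Y (0, 0, p.1, p.2) (max (s - 1 / ((n:ℝ) + 1)) 0))])
          0 1 le_rfl zero_le_one le_rfl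
      simp only [hY0] at this
      simp only [F₂]
      linarith
    obtain ⟨p, hp1, hp2⟩ := miranda F₁ F₂ hc.fst hc.snd.snd.snd (-1) (K₁ + 1) (-1) (K₂ + 1)
      s1 s2 s3 s4
    refine ⟨Y (0, 0, p.1, p.2), p.1, p.2, hY0 _, ⟨?_, ?_⟩, ⟨?_, ?_⟩, hp1, hp2, hYd _⟩
    · by_contra h; linarith [s1 p (by linarith)]
    · by_contra h; linarith [s2 p (by linarith)]
    · by_contra h; linarith [s3 p (by linarith)]
    · by_contra h; linarith [s4 p (by linarith)]
  choose Y p q hY0 hp hq hY1 hY1' hYd using step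
  have hYR : ∀ n, ‖Y n 0‖ ≤ R := by
    intro n
    rw [hY0]
    simp only [Prod.norm_def, Real.norm_eq_abs, sup_le_iff, abs_zero, abs_le]
    have := hp n
    have := hq n
    refine ⟨hR0, hR0, ⟨?_, ?_⟩, ?_, ?_⟩ <;> linarith
  obtain ⟨X, φ, hφ, hXc, hXt, hXd⟩ := limit_ode f hf R R hB Y hYR hYd
  have t0 := hXt 0 (by simp)
  have t1 := hXt 1 (by simp)
  have x1 : (X 0).1 = 0 := tendsto_nhds_unique ((continuous_fst.tendsto _).comp t0)
    (by simp [Function.comp_def, hY0])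
  have x2 : (X 0).2.1 = 0 := tendsto_nhds_unique
    (((continuous_fst.comp continuous_snd).tendsto _).comp t0) (by simp [Function.comp_def, hY0])
  have x3 : (X 1).1 = 0 := tendsto_nhds_unique ((continuous_fst.tendsto _).comp t1)
    (by simp [Function.comp_def, hY1])
  have x4 : (X 1).2.2.2 = 0 := tendsto_nhds_unique
    (((continuous_snd.comp (continuous_snd.comp continuous_snd)).tendsto _).comp t1)
    (by simp [Function.comp_def, hY1'])
  have c3 : Tendsto (fun n => p (φ n)) atTop (𝓝 (X 0).2.2.1) := by
    have := ((continuous_fst.comp (continuous_snd.comp continuous_snd)).tendsto _).comp t0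
    simpa [Function.comp_def, hY0] using this
  have y1 : -1 ≤ (X 0).2.2.1 := ge_of_tendsto' c3 fun n => (hp _).1
  have y2 : (X 0).2.2.1 ≤ K₁ + 1 := le_of_tendsto' c3 fun n => (hp _).2
  have c4 : Tendsto (fun n => q (φ n)) atTop (𝓝 (X 0).2.2.2) := by
    have := ((continuous_snd.comp (continuous_snd.comp continuous_snd)).tendsto _).comp t0
    simpa [Function.comp_def, hY0] using this
  have y3 : -1 ≤ (X 0).2.2.2 := ge_of_tendsto' c4 fun n => (hq _).1
  have y4 : (X 0).2.2.2 ≤ K₂ + 1 := le_of_tendsto' c4 fun n => (hq _).2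
  have d1 := fun t ht => (hXd t ht).fst
  have d2 := fun t ht => (hXd t ht).snd.fst
  have d3 := fun t ht => (hXd t ht).snd.snd.fst
  have d4 := fun t ht => (hXd t ht).snd.snd.snd
  refine ⟨fun t => (X t).1, fun t => (X t).2.1, fun t => (X t).2.2.1, fun t => (X t).2.2.2,
    ?_, ?_, d3, d4, x1, x3, x2, x4⟩
  · intro t ht
    have e1 := deriv_upper _ _ 0 d3 (fun s hs => by
      simp only [f]; linarith [h1 (s, X s)]) 0 t le_rfl ht.1 ht.2
    have e2 := deriv_lower _ _ (-K₁) d3 (fun s hs => by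
      simp only [f]; linarith [h1' (s, X s)]) 0 t le_rfl ht.1 ht.2
    have : HasDerivAt (fun t => (X t).1) (clampR R (X t).2.2.1) t := d1 t ht
    rwa [clampR_eq (by nlinarith [ht.2]) (by linarith)] at this
  · intro t ht
    have e1 := deriv_upper _ _ 0 d4 (fun s hs => by
      simp only [f]; linarith [h2 (s, X s)]) 0 t le_rfl ht.1 ht.2
    have e2 := deriv_lower _ _ (-K₂) d4 (fun s hs => by
      simp only [f]; linarith [h2' (s, X s)]) 0 t le_rfl ht.1 ht.2
    have : HasDerivAt (fun t => (X t).2.1) (clampR R (X t).2.2.2) t := d2 t ht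
    rwa [clampR_eq (by nlinarith [ht.2]) (by linarith)] at this

lemma conc_aux (φ ψ χ : ℝ → ℝ) (hd : ∀ t ∈ Set.Icc (0:ℝ) 1, HasDerivAt φ (ψ t) t)
    (hd' : ∀ t ∈ Set.Icc (0:ℝ) 1, HasDerivAt ψ (χ t) t) (hχ : ∀ t ∈ Set.Icc (0:ℝ) 1, χ t ≤ 0) :
    AntitoneOn ψ (Set.Icc 0 1) ∧ ConcaveOn ℝ (Set.Icc 0 1) φ := by
  have ha : AntitoneOn ψ (Set.Icc 0 1) := by
    intro s hs t ht hst
    have := deriv_upper ψ χ 0 hd' hχ s t hs.1 hst ht.2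
    linarith
  refine ⟨ha, AntitoneOn.concaveOn_of_deriv (convex_Icc 0 1)
    (fun x hx => (hd x hx).continuousAt.continuousWithinAt)
    (fun x hx => (hd x (interior_subset hx)).differentiableAt.differentiableWithinAt) ?_⟩
  intro s hs t ht hst
  rw [(hd s (interior_subset hs)).deriv, (hd t (interior_subset ht)).deriv]
  exact ha (interior_subset hs) (interior_subset ht) hst

lemma conc_two (φ : ℝ → ℝ) (hc : ConcaveOn ℝ (Set.Icc 0 1) φ) (x y l : ℝ)
    (hx : x ∈ Set.Icc (0:ℝ) 1) (hy : y ∈ Set.Icc (0:ℝ) 1) (hl : l ∈ Set.Icc (0:ℝ) 1) :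
    (1 - l) * φ x + l * φ y ≤ φ ((1 - l) * x + l * y) := by
  have := hc.2 hx hy (by linarith [hl.2] : 0 ≤ 1 - l) hl.1 (by ring)
  simpa [smul_eq_mul] using this

lemma conc_nonneg (φ : ℝ → ℝ) (hc : ConcaveOn ℝ (Set.Icc 0 1) φ) (h0 : φ 0 = 0) (h1 : φ 1 = 0)
    (t : ℝ) (ht : t ∈ Set.Icc (0:ℝ) 1) : 0 ≤ φ t := by
  have := conc_two φ hc 0 1 t (by simp) (by simp) ht
  simpa [h0, h1] using this

lemma harnack_one (φ : ℝ → ℝ) (hc : ConcaveOn ℝ (Set.Icc 0 1) φ) (h0 : φ 0 = 0) (h1 : φ 1 = 0)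
    (s t c : ℝ) (hs : s ∈ Set.Icc (0:ℝ) 1) (ht : t ∈ Set.Ioo (0:ℝ) 1) (hct : c ≤ t)
    (hct' : c ≤ 1 - t) : c * φ s ≤ φ t := by
  have hp := conc_nonneg φ hc h0 h1 s hs
  rcases le_total t s with h | h
  · have hs0 : 0 < s := ht.1.trans_le h
    have := conc_two φ hc 0 s (t / s) (by simp) hs
      ⟨div_nonneg ht.1.le hs0.le, (div_le_one hs0).2 h⟩
    rw [h0, mul_zero, zero_add, zero_add, div_mul_cancel₀ _ hs0.ne'] at this
    refine le_trans (mul_le_mul_of_nonneg_right ?_ hp) this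
    refine hct.trans ?_
    rw [le_div_iff₀ hs0]
    nlinarith [ht.1, hs.2]
  · have hs1 : 0 < 1 - s := by linarith [ht.2]
    have := conc_two φ hc 1 s ((1 - t) / (1 - s)) (by simp) hs
      ⟨div_nonneg (by linarith [ht.2]) hs1.le, (div_le_one hs1).2 (by linarith)⟩
    rw [h1, mul_zero, zero_add] at this
    have e : (1 - (1 - t) / (1 - s)) * 1 + (1 - t) / (1 - s) * s = t := by
      field_simp; ring
    rw [e] at this
    refine le_trans (mul_le_mul_of_nonneg_right ?_ hp) this
    refine hct'.trans ?_
    rw [le_div_iff₀ hs1]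
    nlinarith [ht.2, hs.1]

lemma sup_inf_aux (φ : ℝ → ℝ) (a b c : ℝ) (hab : a < b) (hc : 0 < c)
    (h : ∀ s ∈ Set.Icc (0:ℝ) 1, ∀ t ∈ Set.Icc a b, c * φ s ≤ φ t) :
    c * sSup (φ '' Set.Icc (0:ℝ) 1) ≤ sInf (φ '' Set.Icc a b) := by
  apply le_csInf ((Set.nonempty_Icc.2 hab.le).image _)
  rintro _ ⟨t, ht, rfl⟩
  rw [← le_div_iff₀' hc]
  apply csSup_le ((Set.nonempty_Icc.2 zero_le_one).image _)
  rintro _ ⟨s, hs, rfl⟩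
  rw [le_div_iff₀' hc]
  exact h s hs t ht

lemma contDiff_aux (φ ψ χ : ℝ → ℝ) (hd : ∀ t ∈ Set.Icc (0:ℝ) 1, HasDerivAt φ (ψ t) t)
    (hd' : ∀ t ∈ Set.Icc (0:ℝ) 1, HasDerivAt ψ (χ t) t) (hχ : ContinuousOn χ (Set.Icc 0 1)) :
    ContDiffOn ℝ 2 φ (Set.Ioo 0 1) ∧
      ∀ t ∈ Set.Ioo (0:ℝ) 1, deriv φ t = ψ t ∧ deriv (deriv φ) t = χ t := by
  have hs : ∀ t ∈ Set.Ioo (0:ℝ) 1, t ∈ Set.Icc (0:ℝ) 1 := fun t ht => Set.Ioo_subset_Icc_self ht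
  have e1 : ∀ t ∈ Set.Ioo (0:ℝ) 1, deriv φ t = ψ t := fun t ht => (hd t (hs t ht)).deriv
  have e2 : ∀ t ∈ Set.Ioo (0:ℝ) 1, deriv ψ t = χ t := fun t ht => (hd' t (hs t ht)).deriv
  constructor
  · have h2 : (2 : WithTop ℕ∞) = 1 + 1 := by norm_num
    rw [h2, contDiffOn_succ_iff_deriv_of_isOpen isOpen_Ioo]
    refine ⟨fun t ht => (hd t (hs t ht)).differentiableAt.differentiableWithinAt, by simp, ?_⟩
    refine ContDiffOn.congr ?_ e1
    have h1 : (1 : WithTop ℕ∞) = 0 + 1 := by norm_num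
    rw [h1, contDiffOn_succ_iff_deriv_of_isOpen isOpen_Ioo]
    refine ⟨fun t ht => (hd' t (hs t ht)).differentiableAt.differentiableWithinAt, by simp, ?_⟩
    refine ContDiffOn.congr ?_ e2
    rw [contDiffOn_zero]
    exact hχ.mono Set.Ioo_subset_Icc_self
  · intro t ht
    refine ⟨e1 t ht, ?_⟩
    rw [← e2 t ht]
    apply Filter.EventuallyEq.deriv_eq
    filter_upwards [isOpen_Ioo.mem_nhds ht] with s hs using e1 s hs

/-- truncation to `[0, r]` -/
noncomputable def clampI (r x : ℝ) : ℝ := max 0 (min r x)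

lemma clampI_cont (R : ℝ) : Continuous (clampI R) := by unfold clampI; fun_prop

lemma clampI_mem {r : ℝ} (hr : 0 ≤ r) (x : ℝ) : clampI r x ∈ Set.Icc 0 r :=
  ⟨le_max_left _ _, max_le hr (min_le_left _ _)⟩

lemma clampI_eq {r x : ℝ} (hx : x ∈ Set.Icc 0 r) : clampI r x = x := by
  unfold clampI; rw [min_eq_right hx.2, max_eq_right hx.1]

/-- extension of `g` to the whole space -/
noncomputable def extG (ρ₁ ρ₂ : ℝ) (g : ℝ → ℝ → ℝ → ℝ → ℝ → ℝ) (x : ℝ × ℝ × ℝ × ℝ × ℝ) : ℝ :=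
  g (clampI 1 x.1) (clampI ρ₁ x.2.1) (clampI ρ₂ x.2.2.1) |x.2.2.2.1| |x.2.2.2.2|

lemma extG_cont (ρ₁ ρ₂ : ℝ) (hρ₁ : 0 ≤ ρ₁) (hρ₂ : 0 ≤ ρ₂) (g : ℝ → ℝ → ℝ → ℝ → ℝ → ℝ)
    (hg : ContinuousOn
      (fun q : ℝ × ℝ × ℝ × ℝ × ℝ => g q.1 q.2.1 q.2.2.1 q.2.2.2.1 q.2.2.2.2)
      (Set.Icc (0:ℝ) 1 ×ˢ Set.Ici (0:ℝ) ×ˢ Set.Ici (0:ℝ) ×ˢ Set.Ici (0:ℝ) ×ˢ Set.Ici (0:ℝ))) :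
    Continuous (extG ρ₁ ρ₂ g) := by
  have k1 := clampI_cont 1
  have k2 := clampI_cont ρ₁
  have k3 := clampI_cont ρ₂
  have hc : Continuous (fun x : ℝ × ℝ × ℝ × ℝ × ℝ =>
    (clampI 1 x.1, clampI ρ₁ x.2.1, clampI ρ₂ x.2.2.1, |x.2.2.2.1|, |x.2.2.2.2|)) := by fun_prop
  exact hg.comp_continuous hc fun x =>
    ⟨clampI_mem zero_le_one _, (clampI_mem hρ₁ _).1, (clampI_mem hρ₂ _).1, Set.mem_Ici.2 (abs_nonneg _),
      Set.mem_Ici.2 (abs_nonneg _)⟩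

/-- Existence theorem: with `[a₁,b₁] ⊂ (0,1)`, `[a₂,b₂] ⊂ (0,1]`,
`c₁ = min{a₁,1−b₁}`, `c₂ = a₂`, `m₁ = 8`, `m₂ = 2`,
`M₁ = 2/(a₁(b₁−a₁)(2−a₁−b₁))` if `a₁+b₁ ≤ 1`, `M₁ = 2/((1−b₁)(b₁²−a₁²))` if
`a₁+b₁ > 1`, `M₂ = 1/(a₂(b₂−a₂))`, `g₁, g₂` positive and continuous, suppose
there are `ρᵢ, sᵢ > 0` with `ρᵢ < cᵢ·sᵢ` such that `gᵢ < mᵢρᵢ` on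
`[0,1]×[0,ρ₁]×[0,ρ₂]×[0,∞)²`, `g₁ > M₁s₁` on
`[a₁,b₁]×[s₁,s₁/c₁]×[0,s₂/c₂]×[0,∞)²` and `g₂ > M₂s₂` on
`[a₂,b₂]×[0,s₁/c₁]×[s₂,s₂/c₂]×[0,∞)²`.  Then the system has at least one
positive solution. -/
theorem stmt0 (a₁ b₁ a₂ b₂ : ℝ)
    (ha₁ : 0 < a₁) (hab₁ : a₁ < b₁) (hb₁ : b₁ < 1)
    (ha₂ : 0 < a₂) (hab₂ : a₂ < b₂) (hb₂ : b₂ ≤ 1)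
    (c₁ c₂ m₁ m₂ M₁ M₂ : ℝ)
    (hc₁ : c₁ = min a₁ (1 - b₁)) (hc₂ : c₂ = a₂)
    (hm₁ : m₁ = 8) (hm₂ : m₂ = 2)
    (hM₁ : M₁ = if a₁ + b₁ ≤ 1 then 2 / (a₁ * (b₁ - a₁) * (2 - a₁ - b₁))
      else 2 / ((1 - b₁) * (b₁ ^ 2 - a₁ ^ 2)))
    (hM₂ : M₂ = 1 / (a₂ * (b₂ - a₂)))
    (g₁ g₂ : ℝ → ℝ → ℝ → ℝ → ℝ → ℝ)
    (hg₁cont : ContinuousOn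
      (fun q : ℝ × ℝ × ℝ × ℝ × ℝ => g₁ q.1 q.2.1 q.2.2.1 q.2.2.2.1 q.2.2.2.2)
      (Set.Icc (0:ℝ) 1 ×ˢ Set.Ici (0:ℝ) ×ˢ Set.Ici (0:ℝ) ×ˢ Set.Ici (0:ℝ) ×ˢ Set.Ici (0:ℝ)))
    (hg₂cont : ContinuousOn
      (fun q : ℝ × ℝ × ℝ × ℝ × ℝ => g₂ q.1 q.2.1 q.2.2.1 q.2.2.2.1 q.2.2.2.2)
      (Set.Icc (0:ℝ) 1 ×ˢ Set.Ici (0:ℝ) ×ˢ Set.Ici (0:ℝ) ×ˢ Set.Ici (0:ℝ) ×ˢ Set.Ici (0:ℝ)))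
    (hg₁pos : ∀ t ∈ Set.Icc (0:ℝ) 1, ∀ w₁ ∈ Set.Ici (0:ℝ), ∀ w₂ ∈ Set.Ici (0:ℝ),
      ∀ z₁ ∈ Set.Ici (0:ℝ), ∀ z₂ ∈ Set.Ici (0:ℝ), 0 < g₁ t w₁ w₂ z₁ z₂)
    (hg₂pos : ∀ t ∈ Set.Icc (0:ℝ) 1, ∀ w₁ ∈ Set.Ici (0:ℝ), ∀ w₂ ∈ Set.Ici (0:ℝ),
      ∀ z₁ ∈ Set.Ici (0:ℝ), ∀ z₂ ∈ Set.Ici (0:ℝ), 0 < g₂ t w₁ w₂ z₁ z₂)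
    (ρ₁ ρ₂ s₁ s₂ : ℝ)
    (hρ₁ : 0 < ρ₁) (hρ₂ : 0 < ρ₂) (hs₁ : 0 < s₁) (hs₂ : 0 < s₂)
    (hρs₁ : ρ₁ < c₁ * s₁) (hρs₂ : ρ₂ < c₂ * s₂)
    (hsup₁ : ∀ t ∈ Set.Icc (0:ℝ) 1, ∀ w₁ ∈ Set.Icc (0:ℝ) ρ₁, ∀ w₂ ∈ Set.Icc (0:ℝ) ρ₂,
      ∀ z₁ ∈ Set.Ici (0:ℝ), ∀ z₂ ∈ Set.Ici (0:ℝ), g₁ t w₁ w₂ z₁ z₂ < m₁ * ρ₁)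
    (hsup₂ : ∀ t ∈ Set.Icc (0:ℝ) 1, ∀ w₁ ∈ Set.Icc (0:ℝ) ρ₁, ∀ w₂ ∈ Set.Icc (0:ℝ) ρ₂,
      ∀ z₁ ∈ Set.Ici (0:ℝ), ∀ z₂ ∈ Set.Ici (0:ℝ), g₂ t w₁ w₂ z₁ z₂ < m₂ * ρ₂)
    (hinf₁ : ∀ t ∈ Set.Icc a₁ b₁, ∀ w₁ ∈ Set.Icc s₁ (s₁ / c₁),
      ∀ w₂ ∈ Set.Icc (0:ℝ) (s₂ / c₂), ∀ z₁ ∈ Set.Ici (0:ℝ), ∀ z₂ ∈ Set.Ici (0:ℝ),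
      M₁ * s₁ < g₁ t w₁ w₂ z₁ z₂)
    (hinf₂ : ∀ t ∈ Set.Icc a₂ b₂, ∀ w₁ ∈ Set.Icc (0:ℝ) (s₁ / c₁),
      ∀ w₂ ∈ Set.Icc s₂ (s₂ / c₂), ∀ z₁ ∈ Set.Ici (0:ℝ), ∀ z₂ ∈ Set.Ici (0:ℝ),
      M₂ * s₂ < g₂ t w₁ w₂ z₁ z₂) :
    ∃ u v : ℝ → ℝ, IsPosSol a₁ b₁ a₂ b₂ c₁ c₂ g₁ g₂ u v := by
  have hc₁0 : 0 < c₁ := by rw [hc₁]; exact lt_min ha₁ (by linarith)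
  have hc₂0 : 0 < c₂ := by rw [hc₂]; exact ha₂
  have p1 : ∀ x, 0 < extG ρ₁ ρ₂ g₁ x := fun x => hg₁pos _ (clampI_mem zero_le_one _) _
    (clampI_mem hρ₁.le _).1 _ (clampI_mem hρ₂.le _).1 _ (Set.mem_Ici.2 (abs_nonneg _)) _
    (Set.mem_Ici.2 (abs_nonneg _))
  have p2 : ∀ x, 0 < extG ρ₁ ρ₂ g₂ x := fun x => hg₂pos _ (clampI_mem zero_le_one _) _
    (clampI_mem hρ₁.le _).1 _ (clampI_mem hρ₂.le _).1 _ (Set.mem_Ici.2 (abs_nonneg _)) _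
    (Set.mem_Ici.2 (abs_nonneg _))
  have b1 : ∀ x, extG ρ₁ ρ₂ g₁ x < 8 * ρ₁ := fun x => by
    have := hsup₁ _ (clampI_mem zero_le_one x.1) _ (clampI_mem hρ₁.le x.2.1) _
      (clampI_mem hρ₂.le x.2.2.1) _ (abs_nonneg x.2.2.2.1) _ (abs_nonneg x.2.2.2.2)
    rwa [hm₁] at this
  have b2 : ∀ x, extG ρ₁ ρ₂ g₂ x < 2 * ρ₂ := fun x => by
    have := hsup₂ _ (clampI_mem zero_le_one x.1) _ (clampI_mem hρ₁.le x.2.1) _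
      (clampI_mem hρ₂.le x.2.2.1) _ (abs_nonneg x.2.2.2.1) _ (abs_nonneg x.2.2.2.2)
    rwa [hm₂] at this
  obtain ⟨u, v, P, Q, du, dv, dP, dQ, u0, u1, v0, Q1⟩ := bvp (extG ρ₁ ρ₂ g₁) (extG ρ₁ ρ₂ g₂)
    (extG_cont ρ₁ ρ₂ hρ₁.le hρ₂.le g₁ hg₁cont) (extG_cont ρ₁ ρ₂ hρ₁.le hρ₂.le g₂ hg₂cont)
    (8 * ρ₁) (2 * ρ₂) p1 b1 p2 b2
  obtain ⟨-, cu⟩ := conc_aux u P _ du dP (fun t _ => by linarith [p1 (t, u t, v t, P t, Q t)])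
  obtain ⟨aQ, cv⟩ := conc_aux v Q _ dv dQ (fun t _ => by linarith [p2 (t, u t, v t, P t, Q t)])
  have unn := conc_nonneg u cu u0 u1
  have Qnn : ∀ t ∈ Set.Icc (0:ℝ) 1, 0 ≤ Q t := fun t ht => by
    rw [← Q1]; exact aQ ht (by simp) ht.2
  have vmono : ∀ s t : ℝ, 0 ≤ s → s ≤ t → t ≤ 1 → v s ≤ v t := fun s t h1 h2 h3 => by
    linarith [deriv_lower v Q 0 dv Qnn s t h1 h2 h3]
  have vnn : ∀ t ∈ Set.Icc (0:ℝ) 1, 0 ≤ v t := fun t ht => by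
    rw [← v0]; exact vmono 0 t le_rfl ht.1 ht.2
  have ule : ∀ t ∈ Set.Icc (0:ℝ) 1, u t ≤ ρ₁ := by
    obtain ⟨-, cw⟩ := conc_aux (fun t => 4 * ρ₁ * (t - t ^ 2) - u t)
      (fun t => 4 * ρ₁ * (1 - 2 * t) - P t)
      (fun t => 4 * ρ₁ * (-2) - (-extG ρ₁ ρ₂ g₁ (t, u t, v t, P t, Q t)))
      (fun t ht => by
        refine HasDerivAt.sub (HasDerivAt.const_mul _ ?_) (du t ht)
        have h := (hasDerivAt_id' t).fun_sub (hasDerivAt_pow 2 t)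
        exact h.congr_deriv (by simp))
      (fun t ht => by
        refine HasDerivAt.sub (HasDerivAt.const_mul _ ?_) (dP t ht)
        simpa using ((hasDerivAt_id t).const_mul 2).const_sub 1)
      (fun t _ => by linarith [b1 (t, u t, v t, P t, Q t)])
    intro t ht
    have := conc_nonneg _ cw (by simp [u0]) (by simp [u1]) t ht
    nlinarith [mul_nonneg hρ₁.le (sq_nonneg (2 * t - 1))]
  have vle : ∀ t ∈ Set.Icc (0:ℝ) 1, v t ≤ ρ₂ := by
    have dw : ∀ t ∈ Set.Icc (0:ℝ) 1, HasDerivAt (fun t => ρ₂ * (2 * t - t ^ 2) - v t)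
        (ρ₂ * (2 - 2 * t) - Q t) t := fun t ht => by
      refine HasDerivAt.sub (HasDerivAt.const_mul _ ?_) (dv t ht)
      have h := ((hasDerivAt_id' t).const_mul 2).fun_sub (hasDerivAt_pow 2 t)
      exact h.congr_deriv (by simp)
    obtain ⟨aw, -⟩ := conc_aux _ _
      (fun t => ρ₂ * (-2) - (-extG ρ₁ ρ₂ g₂ (t, u t, v t, P t, Q t))) dw
      (fun t ht => by
        refine HasDerivAt.sub (HasDerivAt.const_mul _ ?_) (dQ t ht)
        simpa using ((hasDerivAt_id t).const_mul 2).const_sub 2)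
      (fun t _ => by linarith [b2 (t, u t, v t, P t, Q t)])
    intro t ht
    have := deriv_lower _ _ 0 dw (fun s hs => by
      have := aw hs (Set.right_mem_Icc.2 zero_le_one) hs.2
      simp only [Q1] at this
      linarith) 0 t le_rfl ht.1 ht.2
    simp only [v0] at this
    nlinarith [mul_nonneg hρ₂.le (sq_nonneg (t - 1))]
  have eG : ∀ g : ℝ → ℝ → ℝ → ℝ → ℝ → ℝ, ∀ t ∈ Set.Icc (0:ℝ) 1,
      extG ρ₁ ρ₂ g (t, u t, v t, P t, Q t) = g t (u t) (v t) |P t| |Q t| := by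
    intro g t ht
    simp only [extG]
    rw [clampI_eq ht, clampI_eq ⟨unn t ht, ule t ht⟩, clampI_eq ⟨vnn t ht, vle t ht⟩]
  have hcu : ContinuousOn u (Set.Icc 0 1) := fun t ht =>
    (du t ht).continuousAt.continuousWithinAt
  have hcv : ContinuousOn v (Set.Icc 0 1) := fun t ht =>
    (dv t ht).continuousAt.continuousWithinAt
  have hcP : ContinuousOn P (Set.Icc 0 1) := fun t ht =>
    (dP t ht).continuousAt.continuousWithinAt
  have hcQ : ContinuousOn Q (Set.Icc 0 1) := fun t ht =>
    (dQ t ht).continuousAt.continuousWithinAt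
  have hcX : ContinuousOn (fun t => (t, u t, v t, P t, Q t)) (Set.Icc 0 1) := by fun_prop
  obtain ⟨Cu, Du⟩ := contDiff_aux u P _ du dP
    (((extG_cont ρ₁ ρ₂ hρ₁.le hρ₂.le g₁ hg₁cont).comp_continuousOn hcX).neg)
  obtain ⟨Cv, Dv⟩ := contDiff_aux v Q _ dv dQ
    (((extG_cont ρ₁ ρ₂ hρ₁.le hρ₂.le g₂ hg₂cont).comp_continuousOn hcX).neg)
  refine ⟨u, v, unn, vnn, hcu, hcv, Cu, Cv, ?_, ?_, ?_, u0, u1, v0, ?_, ?_, ?_⟩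
  · rintro ⟨hz, -⟩
    have hh : (1 / 2 : ℝ) ∈ Set.Ioo (0:ℝ) 1 := by constructor <;> norm_num
    have hev : u =ᶠ[𝓝 (1 / 2 : ℝ)] fun _ => 0 := by
      filter_upwards [isOpen_Ioo.mem_nhds hh] with s hs using hz s (Set.Ioo_subset_Icc_self hs)
    have h2 : deriv (deriv u) (1 / 2) = 0 := by
      rw [hev.deriv.deriv_eq]; simp
    have h3 := (Du _ hh).2
    rw [h2] at h3
    linarith [p1 (1 / 2, u (1 / 2), v (1 / 2), P (1 / 2), Q (1 / 2))]
  · intro t ht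
    rw [(Du t ht).2, (Du t ht).1, (Dv t ht).1, neg_neg]
    exact eG g₁ t (Set.Ioo_subset_Icc_self ht)
  · intro t ht
    rw [(Dv t ht).2, (Du t ht).1, (Dv t ht).1, neg_neg]
    exact eG g₂ t (Set.Ioo_subset_Icc_self ht)
  · have := dv 1 (by simp)
    rw [Q1] at this
    exact this.hasDerivWithinAt
  · apply sup_inf_aux u a₁ b₁ c₁ hab₁ hc₁0
    intro s hs t ht
    have k1 : c₁ ≤ a₁ := by rw [hc₁]; exact min_le_left _ _
    have k2 : c₁ ≤ 1 - b₁ := by rw [hc₁]; exact min_le_right _ _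
    exact harnack_one u cu u0 u1 s t c₁ hs ⟨by linarith [ht.1], by linarith [ht.2]⟩
      (by linarith [ht.1]) (by linarith [ht.2])
  · apply sup_inf_aux v a₂ b₂ c₂ hab₂ hc₂0
    intro s hs t ht
    have ht' : t ∈ Set.Icc (0:ℝ) 1 := ⟨by linarith [ht.1], by linarith [ht.2]⟩
    have k1 := conc_two v cv 0 1 t (by simp) (by simp) ht'
    rw [v0, mul_zero, zero_add, zero_add, mul_one] at k1
    have k2 := vmono s 1 hs.1 hs.2 le_rfl
    have k3 := vnn s hs
    have k4 : c₂ ≤ t := by rw [hc₂]; exact ht.1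
    calc c₂ * v s ≤ t * v 1 := mul_le_mul k4 k2 k3 ht'.1
      _ ≤ v t := k1
end

section
/- Suppose that g₁(t,w₁,w₂,z₁,z₂) < 8·w₁ whenever w₁ > 0 and g₂(t,w₁,w₂,z₁,z₂) < 2·w₂ whenever w₂ > 0 (for all t ∈ [0,1], w₁,w₂ ≥ 0, z₁,z₂ ≥ 0). If u,v : [0,1] → [0,∞) are continuous functions satisfying u(t) = ∫₀¹ k₁(t,s)·g₁(s,u(s),v(s),|u'(s)|,|v'(s)|) ds and v(t) = ∫₀¹ k₂(t,s)·g₂(s,u(s),v(s),|u'(s)|,|v'(s)|) ds for all t ∈ [0,1] (with u,v continuously differentiable on (0,1)), then u ≡ 0 and v ≡ 0. -/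
/-- Green's function for the Dirichlet problem on `[0,1]`. -/
noncomputable def k1 (t s : ℝ) : ℝ := if s ≤ t then s * (1 - t) else t * (1 - s)

/-- Green's function for the Robin problem on `[0,1]` (`k₂(t,s) = min{s,t}`). -/
noncomputable def k2 (t s : ℝ) : ℝ := if s ≤ t then s else t

theorem abs_mem (x : ℝ) : |x| ∈ Set.Ici (0:ℝ) := abs_nonneg x

/-- Comparison lemma at a maximum point. -/
theorem aux_contra (k G : ℝ → ℝ) (c M : ℝ) (hM : 0 < M)
    (hk : Continuous k) (hkpos : ∀ s ∈ Set.Ioo (0:ℝ) 1, 0 < k s)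
    (hint : c * ∫ s in (0:ℝ)..1, k s ≤ 1)
    (hG : ∀ s ∈ Set.Ioo (0:ℝ) 1, G s < c * M)
    (heq : M = ∫ s in (0:ℝ)..1, k s * G s) : False := by
  have hi : IntervalIntegrable (fun s => k s * G s) MeasureTheory.volume 0 1 := by
    by_contra h
    rw [intervalIntegral.integral_undef h] at heq
    exact hM.ne' heq
  have hi2 : IntervalIntegrable (fun s => k s * (c * M)) MeasureTheory.volume 0 1 :=
    (hk.mul continuous_const).intervalIntegrable _ _
  have hp := intervalIntegral.intervalIntegral_pos_of_pos_on (hi2.sub hi)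
    (fun s hs => by
      have := mul_lt_mul_of_pos_left (hG s hs) (hkpos s hs)
      simpa using this) zero_lt_one
  rw [intervalIntegral.integral_sub hi2 hi, ← heq, intervalIntegral.integral_mul_const] at hp
  nlinarith

theorem k1_cont (t : ℝ) : Continuous (k1 t) := by
  unfold k1
  refine Continuous.if_le (by fun_prop) (by fun_prop) continuous_id continuous_const ?_
  rintro s h
  rw [h]

theorem k2_cont (t : ℝ) : Continuous (k2 t) := by
  unfold k2
  refine Continuous.if_le (by fun_prop) (by fun_prop) continuous_id continuous_const ?_
  rintro s h
  simpa using h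

theorem k1_int (t : ℝ) (ht : t ∈ Set.Icc (0:ℝ) 1) :
    ∫ s in (0:ℝ)..1, k1 t s = t * (1 - t) / 2 := by
  rw [← intervalIntegral.integral_add_adjacent_intervals
    ((k1_cont t).intervalIntegrable 0 t) ((k1_cont t).intervalIntegrable t 1)]
  have h1 : ∫ s in (0:ℝ)..t, k1 t s = ∫ s in (0:ℝ)..t, s * (1 - t) := by
    apply intervalIntegral.integral_congr
    intro s hs
    rw [Set.uIcc_of_le ht.1] at hs
    simp [k1, hs.2]
  have h2 : ∫ s in t..1, k1 t s = ∫ s in t..1, t * (1 - s) := by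
    apply intervalIntegral.integral_congr
    intro s hs
    rw [Set.uIcc_of_le ht.2] at hs
    simp only [k1]
    split_ifs with h
    · rw [le_antisymm h hs.1]
    · rfl
  rw [h1, h2, intervalIntegral.integral_mul_const, intervalIntegral.integral_const_mul,
    intervalIntegral.integral_sub (by simp) (by simp)]
  simp only [integral_id, intervalIntegral.integral_const, smul_eq_mul]
  ring

theorem k2_int (t : ℝ) (ht : t ∈ Set.Icc (0:ℝ) 1) :
    ∫ s in (0:ℝ)..1, k2 t s = t - t ^ 2 / 2 := by
  rw [← intervalIntegral.integral_add_adjacent_intervals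
    ((k2_cont t).intervalIntegrable 0 t) ((k2_cont t).intervalIntegrable t 1)]
  have h1 : ∫ s in (0:ℝ)..t, k2 t s = ∫ s in (0:ℝ)..t, s := by
    apply intervalIntegral.integral_congr
    intro s hs
    rw [Set.uIcc_of_le ht.1] at hs
    simp [k2, hs.2]
  have h2 : ∫ s in t..1, k2 t s = ∫ s in t..1, t := by
    apply intervalIntegral.integral_congr
    intro s hs
    rw [Set.uIcc_of_le ht.2] at hs
    simp only [k2]
    split_ifs with h
    · exact le_antisymm h hs.1
    · rfl
  rw [h1, h2]
  simp only [integral_id, intervalIntegral.integral_const, smul_eq_mul]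
  ring

/-- A function continuous on `[0,∞)` and bounded by `c w` for `w > 0` is nonpositive at `0`. -/
theorem aux_zero (f : ℝ → ℝ) (c : ℝ) (hf : ContinuousOn f (Set.Ici 0))
    (h : ∀ w, 0 < w → f w < c * w) : f 0 ≤ 0 := by
  have h1 : Filter.Tendsto f (nhdsWithin 0 (Set.Ioi 0)) (nhds (f 0)) :=
    (hf 0 (by simp)).mono_left (nhdsWithin_mono _ Set.Ioi_subset_Ici_self)
  have h2 : Filter.Tendsto (fun w : ℝ => c * w) (nhdsWithin 0 (Set.Ioi 0)) (nhds 0) := by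
    have : Continuous (fun w : ℝ => c * w) := by fun_prop
    have := this.tendsto 0
    simp only [mul_zero] at this
    exact this.mono_left nhdsWithin_le_nhds
  refine le_of_tendsto_of_tendsto h1 h2 ?_
  filter_upwards [self_mem_nhdsWithin] with w hw
  exact (h w hw).le

/-- Abstract version of the argument for one equation. -/
theorem aux_main (k : ℝ → ℝ → ℝ) (G u : ℝ → ℝ) (c : ℝ) (hc : 0 < c)
    (hk : ∀ t, Continuous (k t))
    (hkpos : ∀ t ∈ Set.Icc (0:ℝ) 1, (∀ s ∈ Set.Ioo (0:ℝ) 1, 0 < k t s) ∨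
      (∀ s ∈ Set.Icc (0:ℝ) 1, k t s = 0))
    (hint : ∀ t ∈ Set.Icc (0:ℝ) 1, c * ∫ s in (0:ℝ)..1, k t s ≤ 1)
    (hu0 : ∀ t ∈ Set.Icc (0:ℝ) 1, 0 ≤ u t)
    (hucont : ContinuousOn u (Set.Icc 0 1))
    (hG : ∀ s ∈ Set.Icc (0:ℝ) 1, 0 < u s → G s < c * u s)
    (hG0 : ∀ s ∈ Set.Icc (0:ℝ) 1, u s = 0 → G s ≤ 0)
    (heq : ∀ t ∈ Set.Icc (0:ℝ) 1, u t = ∫ s in (0:ℝ)..1, k t s * G s) :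
    ∀ t ∈ Set.Icc (0:ℝ) 1, u t = 0 := by
  obtain ⟨t, ht, hmax⟩ := isCompact_Icc.exists_isMaxOn
    (Set.nonempty_Icc.2 (zero_le_one : (0:ℝ) ≤ 1)) hucont
  have hle : ∀ s ∈ Set.Icc (0:ℝ) 1, u s ≤ u t := fun s hs => hmax hs
  suffices h : u t ≤ 0 from fun s hs => le_antisymm ((hle s hs).trans h) (hu0 s hs)
  by_contra! hM
  rcases hkpos t ht with hp | hz
  · refine aux_contra (k t) G c (u t) hM (hk t) hp (hint t ht) ?_ (heq t ht)
    intro s hs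
    have hs' := Set.Ioo_subset_Icc_self hs
    rcases (hu0 s hs').eq_or_lt with h0 | h0
    · exact (hG0 s hs' h0.symm).trans_lt (mul_pos hc hM)
    · exact (hG s hs' h0).trans_le (mul_le_mul_of_nonneg_left (hle s hs') hc.le)
  · have : ∫ s in (0:ℝ)..1, k t s * G s = ∫ s in (0:ℝ)..1, (0:ℝ) := by
      apply intervalIntegral.integral_congr
      intro s hs
      rw [Set.uIcc_of_le zero_le_one] at hs
      simp [hz s hs]
    have h2 := heq t ht
    rw [this] at h2
    simp at h2
    exact hM.ne' h2

/-- Non-existence: if `g₁ < 8·w₁` whenever `w₁ > 0` and `g₂ < 2·w₂` whenever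
`w₂ > 0`, then the only nonnegative solution of the system of Hammerstein
integral equations `u = ∫ k₁·g₁`, `v = ∫ k₂·g₂` is the zero one. -/
theorem stmt2 (g₁ g₂ : ℝ → ℝ → ℝ → ℝ → ℝ → ℝ)
    (hg₁cont : ContinuousOn
      (fun q : ℝ × ℝ × ℝ × ℝ × ℝ => g₁ q.1 q.2.1 q.2.2.1 q.2.2.2.1 q.2.2.2.2)
      (Set.Icc (0:ℝ) 1 ×ˢ Set.Ici (0:ℝ) ×ˢ Set.Ici (0:ℝ) ×ˢ Set.Ici (0:ℝ) ×ˢ Set.Ici (0:ℝ)))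
    (hg₂cont : ContinuousOn
      (fun q : ℝ × ℝ × ℝ × ℝ × ℝ => g₂ q.1 q.2.1 q.2.2.1 q.2.2.2.1 q.2.2.2.2)
      (Set.Icc (0:ℝ) 1 ×ˢ Set.Ici (0:ℝ) ×ˢ Set.Ici (0:ℝ) ×ˢ Set.Ici (0:ℝ) ×ˢ Set.Ici (0:ℝ)))
    (hg₁nn : ∀ t ∈ Set.Icc (0:ℝ) 1, ∀ w₁ ∈ Set.Ici (0:ℝ), ∀ w₂ ∈ Set.Ici (0:ℝ),
      ∀ z₁ ∈ Set.Ici (0:ℝ), ∀ z₂ ∈ Set.Ici (0:ℝ), 0 ≤ g₁ t w₁ w₂ z₁ z₂)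
    (hg₂nn : ∀ t ∈ Set.Icc (0:ℝ) 1, ∀ w₁ ∈ Set.Ici (0:ℝ), ∀ w₂ ∈ Set.Ici (0:ℝ),
      ∀ z₁ ∈ Set.Ici (0:ℝ), ∀ z₂ ∈ Set.Ici (0:ℝ), 0 ≤ g₂ t w₁ w₂ z₁ z₂)
    (hg₁ : ∀ t ∈ Set.Icc (0:ℝ) 1, ∀ w₁ ∈ Set.Ici (0:ℝ), ∀ w₂ ∈ Set.Ici (0:ℝ),
      ∀ z₁ ∈ Set.Ici (0:ℝ), ∀ z₂ ∈ Set.Ici (0:ℝ),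
      0 < w₁ → g₁ t w₁ w₂ z₁ z₂ < 8 * w₁)
    (hg₂ : ∀ t ∈ Set.Icc (0:ℝ) 1, ∀ w₁ ∈ Set.Ici (0:ℝ), ∀ w₂ ∈ Set.Ici (0:ℝ),
      ∀ z₁ ∈ Set.Ici (0:ℝ), ∀ z₂ ∈ Set.Ici (0:ℝ),
      0 < w₂ → g₂ t w₁ w₂ z₁ z₂ < 2 * w₂)
    (u v : ℝ → ℝ)
    (hu0 : ∀ t ∈ Set.Icc (0:ℝ) 1, 0 ≤ u t) (hv0 : ∀ t ∈ Set.Icc (0:ℝ) 1, 0 ≤ v t)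
    (hucont : ContinuousOn u (Set.Icc 0 1)) (hvcont : ContinuousOn v (Set.Icc 0 1))
    (huC1 : ContDiffOn ℝ 1 u (Set.Ioo 0 1)) (hvC1 : ContDiffOn ℝ 1 v (Set.Ioo 0 1))
    (hueq : ∀ t ∈ Set.Icc (0:ℝ) 1,
      u t = ∫ s in (0:ℝ)..1, k1 t s * g₁ s (u s) (v s) |deriv u s| |deriv v s|)
    (hveq : ∀ t ∈ Set.Icc (0:ℝ) 1,
      v t = ∫ s in (0:ℝ)..1, k2 t s * g₂ s (u s) (v s) |deriv u s| |deriv v s|) :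
    (∀ t ∈ Set.Icc (0:ℝ) 1, u t = 0) ∧ (∀ t ∈ Set.Icc (0:ℝ) 1, v t = 0) := by
  constructor
  · refine aux_main k1 (fun s => g₁ s (u s) (v s) |deriv u s| |deriv v s|) u 8 (by norm_num)
      k1_cont ?_ ?_ hu0 hucont ?_ ?_ hueq
    · intro t ht
      rcases ht.1.eq_or_lt with h | h
      · right
        intro s hs
        subst h
        simp only [k1]
        split_ifs with h
        · rw [le_antisymm h hs.1]; ring
        · ring
      rcases ht.2.eq_or_lt with h' | h'
      · right
        intro s hs
        subst h'
        simp [k1, hs.2]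
      left
      intro s hs
      simp only [k1]
      split_ifs
      · exact mul_pos hs.1 (by linarith)
      · exact mul_pos h (by linarith [hs.2])
    · intro t ht
      rw [k1_int t ht]
      nlinarith [sq_nonneg (2 * t - 1)]
    · intro s hs h
      exact hg₁ s hs _ (hu0 s hs) _ (hv0 s hs) _ (abs_mem _) _ (abs_mem _) h
    · intro s hs h
      simp only [h]
      refine aux_zero (fun w => g₁ s w (v s) |deriv u s| |deriv v s|) 8 ?_ ?_
      · refine hg₁cont.comp (f := fun w : ℝ => (s, w, v s, |deriv u s|, |deriv v s|))
          (by fun_prop) ?_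
        intro w hw
        exact ⟨hs, hw, hv0 s hs, abs_mem _, abs_mem _⟩
      · intro w hw
        exact hg₁ s hs _ hw.le _ (hv0 s hs) _ (abs_mem _) _ (abs_mem _) hw
  · refine aux_main k2 (fun s => g₂ s (u s) (v s) |deriv u s| |deriv v s|) v 2 (by norm_num)
      k2_cont ?_ ?_ hv0 hvcont ?_ ?_ hveq
    · intro t ht
      rcases ht.1.eq_or_lt with h | h
      · right
        intro s hs
        subst h
        simp only [k2]
        split_ifs with h
        · exact le_antisymm h hs.1
        · rfl
      left
      intro s hs
      simp only [k2]
      split_ifs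
      · exact hs.1
      · exact h
    · intro t ht
      rw [k2_int t ht]
      nlinarith [sq_nonneg (t - 1)]
    · intro s hs h
      exact hg₂ s hs _ (hu0 s hs) _ (hv0 s hs) _ (abs_mem _) _ (abs_mem _) h
    · intro s hs h
      simp only [h]
      refine aux_zero (fun w => g₂ s (u s) w |deriv u s| |deriv v s|) 2 ?_ ?_
      · refine hg₂cont.comp (f := fun w : ℝ => (s, u s, w, |deriv u s|, |deriv v s|))
          (by fun_prop) ?_
        intro w hw
        exact ⟨hs, hu0 s hs, hw, abs_mem _, abs_mem _⟩
      · intro w hw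
        exact hg₂ s hs _ (hu0 s hs) _ hw.le _ (abs_mem _) _ (abs_mem _) hw
end

section
/- Suppose that g₁(t,w₁,w₂,z₁,z₂) > M₁·w₁ whenever w₁ > 0 and g₂(t,w₁,w₂,z₁,z₂) > M₂·w₂ whenever w₂ > 0 (for all t ∈ [0,1], w₁,w₂ ≥ 0, z₁,z₂ ≥ 0). If u,v : [0,1] → [0,∞) are continuous functions, continuously differentiable on (0,1), satisfying u(t) = ∫₀¹ k₁(t,s)·g₁(s,u(s),v(s),|u'(s)|,|v'(s)|) ds and v(t) = ∫₀¹ k₂(t,s)·g₂(s,u(s),v(s),|u'(s)|,|v'(s)|) ds for all t ∈ [0,1], and satisfying the cone conditions min_{t∈[a₁,b₁]} u(t) ≥ c₁·sup_{t∈[0,1]} u(t) and min_{t∈[a₂,b₂]} v(t) ≥ c₂·sup_{t∈[0,1]} v(t), then u ≡ 0 and v ≡ 0. -/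
theorem core_aux (K G h : ℝ → ℝ) (a b L x : ℝ) (ha : 0 ≤ a) (hab : a < b) (hb : b ≤ 1)
    (hh : Continuous h)
    (hL : 0 ≤ L)
    (hK0 : ∀ s ∈ Set.Icc (0:ℝ) 1, 0 ≤ K s)
    (hKh : ∀ s ∈ Set.Icc a b, h s ≤ K s)
    (hKpos : ∀ s ∈ Set.Ioo a b, 0 < K s)
    (hG0 : ∀ s ∈ Set.Icc (0:ℝ) 1, 0 ≤ G s)
    (hGL : ∀ s ∈ Set.Icc a b, L < G s)
    (hx : 0 < x) (hxe : x = ∫ s in (0:ℝ)..1, K s * G s) :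
    L * ∫ s in a..b, h s < x := by
  have hint : IntervalIntegrable (fun s => K s * G s) MeasureTheory.volume 0 1 := by
    by_contra hn
    rw [intervalIntegral.integral_undef hn] at hxe
    linarith
  have h01 : Set.uIcc a b ⊆ Set.uIcc (0:ℝ) 1 := by
    rw [Set.uIcc_of_le hab.le, Set.uIcc_of_le zero_le_one]
    exact Set.Icc_subset_Icc ha hb
  have hint2 := hint.mono_set h01
  have hhi : IntervalIntegrable (fun s => L * h s) MeasureTheory.volume a b :=
    (hh.const_mul L).intervalIntegrable _ _
  have h1 : ∫ s in a..b, K s * G s ≤ x := by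
    rw [hxe]
    apply intervalIntegral.integral_mono_interval ha hab.le hb _ hint
    rw [Filter.EventuallyLE, MeasureTheory.ae_restrict_iff' measurableSet_Ioc]
    refine Filter.Eventually.of_forall fun s hs => ?_
    exact mul_nonneg (hK0 s ⟨hs.1.le, hs.2⟩) (hG0 s ⟨hs.1.le, hs.2⟩)
  have h2 : 0 < ∫ s in a..b, (K s * G s - L * h s) := by
    apply intervalIntegral.intervalIntegral_pos_of_pos_on (hint2.sub hhi) _ hab
    intro s hs
    have hs' := Set.Ioo_subset_Icc_self hs
    have e1 := mul_lt_mul_of_pos_left (hGL s hs') (hKpos s hs)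
    have e2 := mul_le_mul_of_nonneg_left (hKh s hs') hL
    show 0 < K s * G s - L * h s
    linarith
  rw [intervalIntegral.integral_sub hint2 hhi, intervalIntegral.integral_const_mul] at h2
  linarith

/-- If a nonnegative continuous `u` in the cone is not identically zero, it has a positive
minimum on `[a,b]`. -/
theorem cone_aux (u : ℝ → ℝ) (a b c : ℝ) (ha : 0 ≤ a) (hab : a < b) (hb : b ≤ 1) (hc : 0 < c)
    (hu0 : ∀ t ∈ Set.Icc (0:ℝ) 1, 0 ≤ u t) (hu : ContinuousOn u (Set.Icc 0 1))
    (hcone : c * sSup (u '' Set.Icc (0:ℝ) 1) ≤ sInf (u '' Set.Icc a b))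
    (hne : ¬ ∀ t ∈ Set.Icc (0:ℝ) 1, u t = 0) :
    ∃ t ∈ Set.Icc a b, 0 < u t ∧ ∀ s ∈ Set.Icc a b, u t ≤ u s := by
  push Not at hne
  obtain ⟨p, hp, hpu⟩ := hne
  have hsub : Set.Icc a b ⊆ Set.Icc (0:ℝ) 1 := Set.Icc_subset_Icc ha hb
  have hpp : 0 < u p := lt_of_le_of_ne (hu0 p hp) (Ne.symm hpu)
  have hsup : u p ≤ sSup (u '' Set.Icc (0:ℝ) 1) :=
    le_csSup (isCompact_Icc.image_of_continuousOn hu).bddAbove ⟨p, hp, rfl⟩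
  obtain ⟨t, ht, hmin⟩ := isCompact_Icc.exists_isMinOn (Set.nonempty_Icc.2 hab.le) (hu.mono hsub)
  refine ⟨t, ht, ?_, fun s hs => hmin hs⟩
  have hinf : sInf (u '' Set.Icc a b) ≤ u t :=
    csInf_le (isCompact_Icc.image_of_continuousOn (hu.mono hsub)).bddBelow ⟨t, ht, rfl⟩
  have := mul_pos hc (lt_of_lt_of_le hpp hsup)
  linarith

theorem k1_lower (a b t s : ℝ) (hab : a < b) (ht : t ∈ Set.Icc a b) (hs : s ∈ Set.Icc a b) :
    ((b - t) * a * (1 - s) + (t - a) * (1 - b) * s) / (b - a) ≤ k1 t s := by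
  have h := sub_pos.2 hab
  rw [div_le_iff₀ h]
  obtain ⟨h1, h2⟩ := ht
  obtain ⟨h3, h4⟩ := hs
  unfold k1
  split_ifs
  · nlinarith [mul_nonneg (sub_nonneg.2 h2) (sub_nonneg.2 h3)]
  · nlinarith [mul_nonneg (sub_nonneg.2 h1) (sub_nonneg.2 h4)]

theorem k1_int_s3 (a b t : ℝ) (hab : a < b) :
    ∫ s in a..b, ((b - t) * a * (1 - s) + (t - a) * (1 - b) * s) / (b - a)
     = ((b - t) * (a * (b - a) * (2 - a - b) / 2) + (t - a) * ((1 - b) * (b ^ 2 - a ^ 2) / 2))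
        / (b - a) := by
  rw [intervalIntegral.integral_div]
  congr 1
  rw [intervalIntegral.integral_add (by apply Continuous.intervalIntegrable; fun_prop)
    (by apply Continuous.intervalIntegrable; fun_prop), intervalIntegral.integral_const_mul,
    intervalIntegral.integral_const_mul, intervalIntegral.integral_sub
    (by apply Continuous.intervalIntegrable; fun_prop)
    (by apply Continuous.intervalIntegrable; fun_prop)]
  simp
  ring

theorem M1_bound (a b t M : ℝ) (ha : 0 < a) (hab : a < b) (hb : b < 1) (ht : t ∈ Set.Icc a b)
    (hM : M = if a + b ≤ 1 then 2 / (a * (b - a) * (2 - a - b))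
      else 2 / ((1 - b) * (b ^ 2 - a ^ 2))) :
    0 < M ∧ 1 ≤ M * (((b - t) * (a * (b - a) * (2 - a - b) / 2)
      + (t - a) * ((1 - b) * (b ^ 2 - a ^ 2) / 2)) / (b - a)) := by
  obtain ⟨h1, h2⟩ := ht
  have hd : 0 < b - a := by linarith
  have hA : 0 < a * (b - a) * (2 - a - b) := mul_pos (mul_pos ha hd) (by linarith)
  have hB : 0 < (1 - b) * (b ^ 2 - a ^ 2) := mul_pos (by linarith) (by nlinarith)
  have hdiff : (1 - b) * (b ^ 2 - a ^ 2) - a * (b - a) * (2 - a - b)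
    = (b - a) ^ 2 * (1 - (a + b)) := by ring
  generalize a * (b - a) * (2 - a - b) = A at *
  generalize (1 - b) * (b ^ 2 - a ^ 2) = B at *
  split_ifs at hM with h
  · have hAB : A ≤ B := by nlinarith [mul_nonneg (sq_nonneg (b - a)) (sub_nonneg.2 h)]
    subst hM
    refine ⟨by positivity, ?_⟩
    rw [div_mul_div_comm, le_div_iff₀ (by positivity)]
    nlinarith [mul_nonneg (sub_nonneg.2 h1) (sub_nonneg.2 hAB)]
  · have hAB : B ≤ A := by
      nlinarith [mul_nonneg (sq_nonneg (b - a)) (sub_nonneg.2 (not_le.1 h).le)]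
    subst hM
    refine ⟨by positivity, ?_⟩
    rw [div_mul_div_comm, le_div_iff₀ (by positivity)]
    nlinarith [mul_nonneg (sub_nonneg.2 h2) (sub_nonneg.2 hAB)]

/-- Non-existence: if `g₁ > M₁·w₁` whenever `w₁ > 0` and `g₂ > M₂·w₂` whenever
`w₂ > 0`, then the only nonnegative solution of the system of Hammerstein
integral equations `u = ∫ k₁·g₁`, `v = ∫ k₂·g₂` lying in the cone (i.e.
satisfying the Harnack-type inequalities `min_{[aᵢ,bᵢ]} ≥ cᵢ·sup_{[0,1]}`) is
the zero one.  Here `c₁ = min{a₁, 1−b₁}`, `c₂ = a₂`,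
`M₁ = 2/(a₁(b₁−a₁)(2−a₁−b₁))` if `a₁+b₁ ≤ 1`, `M₁ = 2/((1−b₁)(b₁²−a₁²))` if
`a₁+b₁ > 1`, and `M₂ = 1/(a₂(b₂−a₂))`. -/
theorem stmt3 (a₁ b₁ a₂ b₂ : ℝ)
    (ha₁ : 0 < a₁) (hab₁ : a₁ < b₁) (hb₁ : b₁ < 1)
    (ha₂ : 0 < a₂) (hab₂ : a₂ < b₂) (hb₂ : b₂ ≤ 1)
    (c₁ c₂ M₁ M₂ : ℝ)
    (hc₁ : c₁ = min a₁ (1 - b₁)) (hc₂ : c₂ = a₂)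
    (hM₁ : M₁ = if a₁ + b₁ ≤ 1 then 2 / (a₁ * (b₁ - a₁) * (2 - a₁ - b₁))
      else 2 / ((1 - b₁) * (b₁ ^ 2 - a₁ ^ 2)))
    (hM₂ : M₂ = 1 / (a₂ * (b₂ - a₂)))
    (g₁ g₂ : ℝ → ℝ → ℝ → ℝ → ℝ → ℝ)
    (hg₁cont : ContinuousOn
      (fun q : ℝ × ℝ × ℝ × ℝ × ℝ => g₁ q.1 q.2.1 q.2.2.1 q.2.2.2.1 q.2.2.2.2)
      (Set.Icc (0:ℝ) 1 ×ˢ Set.Ici (0:ℝ) ×ˢ Set.Ici (0:ℝ) ×ˢ Set.Ici (0:ℝ) ×ˢ Set.Ici (0:ℝ)))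
    (hg₂cont : ContinuousOn
      (fun q : ℝ × ℝ × ℝ × ℝ × ℝ => g₂ q.1 q.2.1 q.2.2.1 q.2.2.2.1 q.2.2.2.2)
      (Set.Icc (0:ℝ) 1 ×ˢ Set.Ici (0:ℝ) ×ˢ Set.Ici (0:ℝ) ×ˢ Set.Ici (0:ℝ) ×ˢ Set.Ici (0:ℝ)))
    (hg₁nn : ∀ t ∈ Set.Icc (0:ℝ) 1, ∀ w₁ ∈ Set.Ici (0:ℝ), ∀ w₂ ∈ Set.Ici (0:ℝ),
      ∀ z₁ ∈ Set.Ici (0:ℝ), ∀ z₂ ∈ Set.Ici (0:ℝ), 0 ≤ g₁ t w₁ w₂ z₁ z₂)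
    (hg₂nn : ∀ t ∈ Set.Icc (0:ℝ) 1, ∀ w₁ ∈ Set.Ici (0:ℝ), ∀ w₂ ∈ Set.Ici (0:ℝ),
      ∀ z₁ ∈ Set.Ici (0:ℝ), ∀ z₂ ∈ Set.Ici (0:ℝ), 0 ≤ g₂ t w₁ w₂ z₁ z₂)
    (hg₁ : ∀ t ∈ Set.Icc (0:ℝ) 1, ∀ w₁ ∈ Set.Ici (0:ℝ), ∀ w₂ ∈ Set.Ici (0:ℝ),
      ∀ z₁ ∈ Set.Ici (0:ℝ), ∀ z₂ ∈ Set.Ici (0:ℝ),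
      0 < w₁ → M₁ * w₁ < g₁ t w₁ w₂ z₁ z₂)
    (hg₂ : ∀ t ∈ Set.Icc (0:ℝ) 1, ∀ w₁ ∈ Set.Ici (0:ℝ), ∀ w₂ ∈ Set.Ici (0:ℝ),
      ∀ z₁ ∈ Set.Ici (0:ℝ), ∀ z₂ ∈ Set.Ici (0:ℝ),
      0 < w₂ → M₂ * w₂ < g₂ t w₁ w₂ z₁ z₂)
    (u v : ℝ → ℝ)
    (hu0 : ∀ t ∈ Set.Icc (0:ℝ) 1, 0 ≤ u t) (hv0 : ∀ t ∈ Set.Icc (0:ℝ) 1, 0 ≤ v t)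
    (hucont : ContinuousOn u (Set.Icc 0 1)) (hvcont : ContinuousOn v (Set.Icc 0 1))
    (huC1 : ContDiffOn ℝ 1 u (Set.Ioo 0 1)) (hvC1 : ContDiffOn ℝ 1 v (Set.Ioo 0 1))
    (hueq : ∀ t ∈ Set.Icc (0:ℝ) 1,
      u t = ∫ s in (0:ℝ)..1, k1 t s * g₁ s (u s) (v s) |deriv u s| |deriv v s|)
    (hveq : ∀ t ∈ Set.Icc (0:ℝ) 1,
      v t = ∫ s in (0:ℝ)..1, k2 t s * g₂ s (u s) (v s) |deriv u s| |deriv v s|)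
    (hucone : c₁ * sSup (u '' Set.Icc (0:ℝ) 1) ≤ sInf (u '' Set.Icc a₁ b₁))
    (hvcone : c₂ * sSup (v '' Set.Icc (0:ℝ) 1) ≤ sInf (v '' Set.Icc a₂ b₂)) :
    (∀ t ∈ Set.Icc (0:ℝ) 1, u t = 0) ∧ (∀ t ∈ Set.Icc (0:ℝ) 1, v t = 0) := by
  constructor
  · by_contra hne
    have hc : 0 < c₁ := by rw [hc₁]; exact lt_min ha₁ (by linarith)
    obtain ⟨t, ht, htp, hmin⟩ := cone_aux u a₁ b₁ c₁ ha₁.le hab₁ hb₁.le hc hu0 hucont hucone hne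
    obtain ⟨hMp, hMb⟩ := M1_bound a₁ b₁ t M₁ ha₁ hab₁ hb₁ ht hM₁
    have ht01 : t ∈ Set.Icc (0:ℝ) 1 := ⟨by linarith [ht.1], by linarith [ht.2]⟩
    have key := core_aux (fun s => k1 t s) (fun s => g₁ s (u s) (v s) |deriv u s| |deriv v s|)
      (fun s => ((b₁ - t) * a₁ * (1 - s) + (t - a₁) * (1 - b₁) * s) / (b₁ - a₁))
      a₁ b₁ (M₁ * u t) (u t) ha₁.le hab₁ hb₁.le (by fun_prop) (mul_pos hMp htp).le
      (by
        intro s hs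
        have := hs.1; have := hs.2; have := ht01.1; have := ht01.2
        dsimp only [k1]
        split_ifs
        · exact mul_nonneg (by linarith) (by linarith)
        · exact mul_nonneg (by linarith) (by linarith))
      (fun s hs => k1_lower a₁ b₁ t s hab₁ ht hs)
      (by
        intro s hs
        have := hs.1; have := hs.2; have := ht.1; have := ht.2
        dsimp only [k1]
        split_ifs
        · exact mul_pos (by linarith) (by linarith)
        · exact mul_pos (by linarith) (by linarith))
      (fun s hs => hg₁nn s hs _ (hu0 s hs) _ (hv0 s hs) _ (abs_nonneg (deriv u s)) _
        (abs_nonneg (deriv v s)))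
      (by
        intro s hs
        have hs01 : s ∈ Set.Icc (0:ℝ) 1 := ⟨by linarith [hs.1], by linarith [hs.2]⟩
        have e := hmin s hs
        have := hg₁ s hs01 _ (hu0 s hs01) _ (hv0 s hs01) _ (abs_nonneg (deriv u s)) _
          (abs_nonneg (deriv v s)) (lt_of_lt_of_le htp e)
        exact lt_of_le_of_lt (mul_le_mul_of_nonneg_left e hMp.le) this)
      htp (hueq t ht01)
    rw [k1_int_s3 a₁ b₁ t hab₁] at key
    have := mul_le_mul_of_nonneg_left hMb htp.le
    linarith
  · by_contra hne
    have hc : 0 < c₂ := by rw [hc₂]; exact ha₂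
    obtain ⟨t, ht, htp, hmin⟩ := cone_aux v a₂ b₂ c₂ ha₂.le hab₂ hb₂ hc hv0 hvcont hvcone hne
    have hd : 0 < b₂ - a₂ := by linarith
    have hMp : 0 < M₂ := by rw [hM₂]; positivity
    have hMb : M₂ * ((b₂ - a₂) * a₂) = 1 := by rw [hM₂]; field_simp
    have ht01 : t ∈ Set.Icc (0:ℝ) 1 := ⟨by linarith [ht.1], by linarith [ht.2]⟩
    have key := core_aux (fun s => k2 t s) (fun s => g₂ s (u s) (v s) |deriv u s| |deriv v s|)
      (fun s => a₂)
      a₂ b₂ (M₂ * v t) (v t) ha₂.le hab₂ hb₂ (by fun_prop) (mul_pos hMp htp).le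
      (by
        intro s hs
        have := hs.1; have := ht01.1
        dsimp only [k2]
        split_ifs <;> linarith)
      (by
        intro s hs
        have := hs.1; have := ht.1
        dsimp only [k2]
        split_ifs <;> linarith)
      (by
        intro s hs
        have := hs.1; have := ht.1
        dsimp only [k2]
        split_ifs <;> linarith)
      (fun s hs => hg₂nn s hs _ (hu0 s hs) _ (hv0 s hs) _ (abs_nonneg (deriv u s)) _
        (abs_nonneg (deriv v s)))
      (by
        intro s hs
        have hs01 : s ∈ Set.Icc (0:ℝ) 1 := ⟨by linarith [hs.1], by linarith [hs.2]⟩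
        have e := hmin s hs
        have := hg₂ s hs01 _ (hu0 s hs01) _ (hv0 s hs01) _ (abs_nonneg (deriv u s)) _
          (abs_nonneg (deriv v s)) (lt_of_lt_of_le htp e)
        exact lt_of_le_of_lt (mul_le_mul_of_nonneg_left e hMp.le) this)
      htp (hveq t ht01)
    rw [intervalIntegral.integral_const, smul_eq_mul] at key
    have e : M₂ * v t * ((b₂ - a₂) * a₂) = v t := by
      rw [mul_right_comm, hMb, one_mul]
    linarith
end

section
/- Let [a,b] ⊂ (0,1). If a + b ≤ 1, then inf_{t∈[a,b]} ∫ₐᵇ k₁(t,s) ds = a(b−a)(2−a−b)/2; if a + b > 1, then inf_{t∈[a,b]} ∫ₐᵇ k₁(t,s) ds = (1−b)(b²−a²)/2. -/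
theorem k1_integral (a b t : ℝ) (h1 : a ≤ t) (h2 : t ≤ b) :
    ∫ s in a..b, k1 t s = (-t ^ 2 - a ^ 2 + t * (a ^ 2 + 1 - (1 - b) ^ 2)) / 2 := by
  have e1 : Set.EqOn (fun s => s * (1 - t)) (fun s => k1 t s) (Set.uIoc a t) := by
    intro s hs
    rw [Set.uIoc_of_le h1] at hs
    simp [k1, hs.2]
  have e2 : Set.EqOn (fun s => t * (1 - s)) (fun s => k1 t s) (Set.uIoc t b) := by
    intro s hs
    rw [Set.uIoc_of_le h2] at hs
    simp [k1, not_le.mpr hs.1]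
  have c1 : IntervalIntegrable (fun s : ℝ => s * (1 - t)) MeasureTheory.volume a t :=
    Continuous.intervalIntegrable (by fun_prop) _ _
  have c2 : IntervalIntegrable (fun s : ℝ => t * (1 - s)) MeasureTheory.volume t b :=
    Continuous.intervalIntegrable (by fun_prop) _ _
  have i1 : ∫ s in a..t, k1 t s = ∫ s in a..t, s * (1 - t) :=
    intervalIntegral.integral_congr_ae (Filter.Eventually.of_forall fun s hs => (e1 hs).symm)
  have i2 : ∫ s in t..b, k1 t s = ∫ s in t..b, t * (1 - s) :=
    intervalIntegral.integral_congr_ae (Filter.Eventually.of_forall fun s hs => (e2 hs).symm)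
  rw [← intervalIntegral.integral_add_adjacent_intervals (c1.congr e1) (c2.congr e2), i1, i2,
    intervalIntegral.integral_mul_const, intervalIntegral.integral_const_mul,
    intervalIntegral.integral_sub (by simp) (by simp)]
  simp only [integral_id, intervalIntegral.integral_const, smul_eq_mul]
  ring

/-- Let `[a,b] ⊂ (0,1)`.  If `a + b ≤ 1` then
`inf_{t∈[a,b]} ∫ₐᵇ k₁(t,s) ds = a(b−a)(2−a−b)/2`; if `a + b > 1` then
`inf_{t∈[a,b]} ∫ₐᵇ k₁(t,s) ds = (1−b)(b²−a²)/2`. -/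
theorem stmt9 (a b : ℝ) (ha : 0 < a) (hab : a < b) (hb : b < 1) :
    (a + b ≤ 1 →
      sInf ((fun t => ∫ s in a..b, k1 t s) '' Set.Icc a b)
        = a * (b - a) * (2 - a - b) / 2) ∧
    (1 < a + b →
      sInf ((fun t => ∫ s in a..b, k1 t s) '' Set.Icc a b)
        = (1 - b) * (b ^ 2 - a ^ 2) / 2) := by
  constructor
  · intro h
    apply IsLeast.csInf_eq
    constructor
    · refine ⟨a, ⟨le_refl a, hab.le⟩, ?_⟩
      simp only [k1_integral a b a le_rfl hab.le]
      ring
    · rintro _ ⟨t, ⟨h1, h2⟩, rfl⟩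
      simp only [k1_integral a b t h1 h2]
      have p1 : 0 ≤ (t - a) * ((b - t) + (b - a) * (1 - a - b)) :=
        mul_nonneg (by linarith)
          (add_nonneg (by linarith) (mul_nonneg (by linarith) (by linarith)))
      linarith
  · intro h
    apply IsLeast.csInf_eq
    constructor
    · refine ⟨b, ⟨hab.le, le_refl b⟩, ?_⟩
      simp only [k1_integral a b b hab.le le_rfl]
      ring
    · rintro _ ⟨t, ⟨h1, h2⟩, rfl⟩
      simp only [k1_integral a b t h1 h2]
      have p1 : 0 ≤ (b - t) * ((t - a) + (b - a) * (a + b - 1)) :=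
        mul_nonneg (by linarith)
          (add_nonneg (by linarith) (mul_nonneg (by linarith) (by linarith)))
      linarith
end

section
/- Let [a,b] ⊂ (0,1] and let h : [0,1] → [0,∞) be continuous. Define w(t) = ∫₀¹ k₂(t,s)·h(s) ds for t ∈ [0,1]. Then min_{t∈[a,b]} w(t) ≥ a · max_{t∈[0,1]} w(t). -/
/-- Let `[a,b] ⊂ (0,1]` and let `h : [0,1] → [0,∞)` be continuous.  If
`w(t) = ∫₀¹ k₂(t,s)h(s) ds`, then `min_{t∈[a,b]} w(t) ≥ a·max_{t∈[0,1]} w(t)`. -/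
theorem stmt12 (a b : ℝ) (ha : 0 < a) (hab : a < b) (hb : b ≤ 1)
    (h : ℝ → ℝ) (hcont : ContinuousOn h (Set.Icc 0 1))
    (hpos : ∀ t ∈ Set.Icc (0:ℝ) 1, 0 ≤ h t)
    (w : ℝ → ℝ) (hw : ∀ t ∈ Set.Icc (0:ℝ) 1, w t = ∫ s in (0:ℝ)..1, k2 t s * h s) :
    a * sSup (w '' Set.Icc (0:ℝ) 1) ≤ sInf (w '' Set.Icc a b) := by
  have hk : ∀ t s : ℝ, k2 t s = min s t := by
    intro t s
    unfold k2
    rw [min_def]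
  have hint : ∀ t : ℝ, IntervalIntegrable (fun s => k2 t s * h s) MeasureTheory.volume 0 1 := by
    intro t
    apply ContinuousOn.intervalIntegrable
    rw [Set.uIcc_of_le zero_le_one]
    simp only [hk]
    exact (by fun_prop : Continuous fun s : ℝ => min s t).continuousOn.mul hcont
  have key : ∀ t ∈ Set.Icc a b, ∀ u ∈ Set.Icc (0:ℝ) 1, a * w u ≤ w t := by
    intro t ht u hu
    rw [hw u hu, hw t ⟨ha.le.trans ht.1, ht.2.trans hb⟩, ← intervalIntegral.integral_const_mul]
    apply intervalIntegral.integral_mono_on zero_le_one ((hint u).const_mul a) (hint t)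
    intro s hs
    rw [← mul_assoc]
    apply mul_le_mul_of_nonneg_right _ (hpos s hs)
    rw [hk, hk]
    have h1 : min s u ≤ s := min_le_left _ _
    have h2 : min s u ≤ u := min_le_right _ _
    have h3 : 0 ≤ min s u := le_min hs.1 hu.1
    apply le_min
    · nlinarith
    · nlinarith [ht.1, hu.2]
  apply le_csInf ((Set.nonempty_Icc.2 hab.le).image w)
  rintro _ ⟨t, ht, rfl⟩
  rw [mul_comm, ← le_div_iff₀ ha]
  apply csSup_le ((Set.nonempty_Icc.2 zero_le_one).image w)
  rintro _ ⟨u, hu, rfl⟩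
  rw [le_div_iff₀ ha, mul_comm]
  exact key t ht u hu
end

section
/- Let h : [0,1] → [0,∞) be continuous and define w(t) = ∫₀¹ k₁(t,s)·h(s) ds = (1−t)∫₀ᵗ s·h(s) ds + t∫ₜ¹ (1−s)·h(s) ds for t ∈ [0,1]. Then for every t ∈ [0,1], t(1−t)·|w'(t)| ≤ w(t); in particular sup_{t∈(0,1)} t(1−t)|w'(t)| ≤ max_{t∈[0,1]} w(t). -/
/-- Let `h : [0,1] → [0,∞)` be continuous and
`w(t) = ∫₀¹ k₁(t,s)h(s) ds = (1−t)∫₀ᵗ s·h(s) ds + t∫ₜ¹ (1−s)·h(s) ds`.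
Then `t(1−t)|w'(t)| ≤ w(t)` for every `t ∈ [0,1]`; in particular
`sup_{t∈(0,1)} t(1−t)|w'(t)| ≤ max_{t∈[0,1]} w(t)`. -/
theorem stmt13 (h : ℝ → ℝ) (hcont : ContinuousOn h (Set.Icc 0 1))
    (hpos : ∀ t ∈ Set.Icc (0:ℝ) 1, 0 ≤ h t)
    (w : ℝ → ℝ) (hw : ∀ t ∈ Set.Icc (0:ℝ) 1, w t = ∫ s in (0:ℝ)..1, k1 t s * h s)
    (hw' : ∀ t ∈ Set.Icc (0:ℝ) 1,
      w t = (1 - t) * (∫ s in (0:ℝ)..t, s * h s) + t * ∫ s in t..(1:ℝ), (1 - s) * h s) :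
    (∀ t ∈ Set.Icc (0:ℝ) 1, t * (1 - t) * |deriv w t| ≤ w t) ∧
    sSup ((fun t => t * (1 - t) * |deriv w t|) '' Set.Ioo (0:ℝ) 1)
      ≤ sSup (w '' Set.Icc (0:ℝ) 1) := by
  have h01 : (0:ℝ) ≤ 1 := zero_le_one
  obtain ⟨g, hg, hgh⟩ : ∃ g : ℝ → ℝ, Continuous g ∧ ∀ t ∈ Set.Icc (0:ℝ) 1, g t = h t := by
    refine ⟨Set.IccExtend h01 (Set.restrict (Set.Icc 0 1) h), ?_, ?_⟩
    · exact (continuousOn_iff_continuous_restrict.mp hcont).Icc_extend'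
    · intro t ht
      rw [Set.IccExtend_of_mem h01 _ ht]
      rfl
  have hc1 : Continuous (fun s => s * g s) := continuous_id.mul hg
  have hc2 : Continuous (fun s => (1 - s) * g s) := (continuous_const.sub continuous_id).mul hg
  have hwF : ∀ t ∈ Set.Icc (0:ℝ) 1,
      w t = (1 - t) * (∫ s in (0:ℝ)..t, s * g s) + t * ∫ s in t..(1:ℝ), (1 - s) * g s := by
    intro t ht
    rw [hw' t ht]
    congr 2
    · apply intervalIntegral.integral_congr
      intro s hs
      rw [Set.uIcc_of_le ht.1] at hs
      simp only
      rw [hgh s ⟨hs.1, hs.2.trans ht.2⟩]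
    · apply intervalIntegral.integral_congr
      intro s hs
      rw [Set.uIcc_of_le ht.2] at hs
      simp only
      rw [hgh s ⟨ht.1.trans hs.1, hs.2⟩]
  have hA : ∀ t ∈ Set.Icc (0:ℝ) 1, 0 ≤ ∫ s in (0:ℝ)..t, s * g s := by
    intro t ht
    apply intervalIntegral.integral_nonneg ht.1
    intro s hs
    have hs' : s ∈ Set.Icc (0:ℝ) 1 := ⟨hs.1, hs.2.trans ht.2⟩
    rw [hgh s hs']
    exact mul_nonneg hs.1 (hpos s hs')
  have hB : ∀ t ∈ Set.Icc (0:ℝ) 1, 0 ≤ ∫ s in t..(1:ℝ), (1 - s) * g s := by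
    intro t ht
    apply intervalIntegral.integral_nonneg ht.2
    intro s hs
    have hs' : s ∈ Set.Icc (0:ℝ) 1 := ⟨ht.1.trans hs.1, hs.2⟩
    rw [hgh s hs']
    exact mul_nonneg (sub_nonneg.mpr hs.2) (hpos s hs')
  have hF : ∀ t : ℝ, HasDerivAt
      (fun t : ℝ => (1 - t) * (∫ s in (0:ℝ)..t, s * g s) + t * ∫ s in t..(1:ℝ), (1 - s) * g s)
      ((∫ s in t..(1:ℝ), (1 - s) * g s) - ∫ s in (0:ℝ)..t, s * g s) t := by
    intro t
    have e1 : HasDerivAt (fun t : ℝ => ∫ s in (0:ℝ)..t, s * g s) (t * g t) t :=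
      intervalIntegral.integral_hasDerivAt_right (hc1.intervalIntegrable _ _)
        (hc1.stronglyMeasurableAtFilter _ _) hc1.continuousAt
    have e2 : HasDerivAt (fun t : ℝ => ∫ s in t..(1:ℝ), (1 - s) * g s) (-((1 - t) * g t)) t :=
      intervalIntegral.integral_hasDerivAt_left (hc2.intervalIntegrable _ _)
        (hc2.stronglyMeasurableAtFilter _ _) hc2.continuousAt
    have e3 := (((hasDerivAt_id t).const_sub 1).mul e1).add ((hasDerivAt_id t).mul e2)
    refine e3.congr_deriv ?_
    simp only [id]
    ring
  have hnn : ∀ t ∈ Set.Icc (0:ℝ) 1, 0 ≤ w t := by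
    intro t ht
    rw [hwF t ht]
    exact add_nonneg (mul_nonneg (sub_nonneg.mpr ht.2) (hA t ht)) (mul_nonneg ht.1 (hB t ht))
  have main : ∀ t ∈ Set.Icc (0:ℝ) 1, t * (1 - t) * |deriv w t| ≤ w t := by
    intro t ht
    rcases ht.1.eq_or_lt with h0 | h0
    · have := hnn t ht
      subst h0
      simpa using this
    rcases ht.2.eq_or_lt with h1 | h1
    · have := hnn t ht
      subst h1
      simpa using this
    have hd : deriv w t = (∫ s in t..(1:ℝ), (1 - s) * g s) - ∫ s in (0:ℝ)..t, s * g s := by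
      refine ((hF t).congr_of_eventuallyEq ?_).deriv
      filter_upwards [Icc_mem_nhds h0 h1] with x hx using hwF x hx
    rw [hd, hwF t ht]
    have a := hA t ht
    have b := hB t ht
    generalize (∫ s in t..(1:ℝ), (1 - s) * g s) = B at *
    generalize (∫ s in (0:ℝ)..t, s * g s) = A at *
    have hab : |B - A| ≤ A + B := abs_le.mpr ⟨by linarith, by linarith⟩
    have hp : 0 ≤ t * (1 - t) := mul_nonneg h0.le (by linarith)
    have k := mul_le_mul_of_nonneg_left hab hp
    have k1 : 0 ≤ (1 - t) * (1 - t) * A := mul_nonneg (mul_self_nonneg _) a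
    have k2 : 0 ≤ t * t * B := mul_nonneg (mul_self_nonneg _) b
    nlinarith
  refine ⟨main, ?_⟩
  have hwc : ContinuousOn w (Set.Icc 0 1) :=
    ContinuousOn.congr (fun t _ => (hF t).continuousAt.continuousWithinAt) hwF
  have hbdd : BddAbove (w '' Set.Icc (0:ℝ) 1) := (isCompact_Icc.image_of_continuousOn hwc).bddAbove
  apply csSup_le
  · exact ⟨_, 1/2, ⟨by norm_num, by norm_num⟩, rfl⟩
  · rintro _ ⟨t, ht, rfl⟩
    have ht' := Set.Ioo_subset_Icc_self ht
    exact (main t ht').trans (le_csSup hbdd ⟨t, ht', rfl⟩)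
end
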